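/- Let d ∈ ℕ. There exists a constant C(d) > 0 depending only on d such that for every n ∈ ℕ, every Gaussian random vector X in ℝⁿ, and every non-constant polynomial g on ℝⁿ of total degree at most d, the density ϱ_g of g(X) satisfies σ(ϱ_g, ε) ≤ C(d) [𝔻g(X)]^{−1/(2d)} ε^{1/d} for all ε > 0, where 𝔻g(X) is the variance of g(X). -/

import Mathlib

/-!
Let `x` and `y` be independent standard Gaussian vectors. Rotating the pair to
`x_t = cos t • x + sin t • y`, `y_t = -sin t • x + cos t • y` preserves its law. Along the
circle `t ↦ x_t` a polynomial of degree `k` is a trigonometric polynomial of degree at most `k`, in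
any dimension, and its derivative in `t` is its derivative at `x_t` in the direction `y_t`.
Inequalities for trigonometric polynomials of one variable, averaged over the pair, therefore become
Gaussian inequalities with constants that depend only on the degree: the Poincaré inequality and its
reverse, a reverse Hölder inequality and, after an integration by parts on the circle,
`|E φ'(g(x)) D² / (D² + |∇g(x)|² + δ²)| ≲ ε / δ` for `|φ| ≤ ε`, where `D` is the derivative of `g`
at `x` in the direction `y`.

Conditionally on `x`, the derivative `D` is `|∇g(x)|` times a standard Gaussian variable, so
averaging over `y` replaces the fraction by a positive constant, up to an error of at most
`δ² / (|∇g(x)|² + δ²)`. When `|φ'| ≤ 1` this gives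
`|E φ'(g)| ≲ ε / δ + E δ² / (|∇g|² + δ²)`. The last term is a softened small-ball probability of the
gradient. For families `F` of polynomials of degree at most `k`, such probabilities are bounded by
`E δ² / (|F|² + δ²) ≲ u` for `δ² = u ^ (2k) E|F|²`, by induction on `k`: where the Jacobian of `F`
is large, integration by parts on circles applies, and the Jacobian is rarely small because its
degree is smaller.

With `τ² = E|∇g|²`, `ε = τ u ^ d` and `δ = τ u ^ (d - 1)` both terms are of order
`u = (ε / τ) ^ (1 / d)`, and `τ² ≥ 𝔻g / 2` by the Poincaré inequality. The density exists because
the resulting bound for `E φ'(g)` forces the law of `g` to be absolutely continuous.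
-/

open MeasureTheory ProbabilityTheory

/-- The modulus `σ(ϱ, ε) = sup { ∫ φ' ϱ : φ ∈ C₀^∞(ℝ), ‖φ‖_∞ ≤ ε, ‖φ'‖_∞ ≤ 1 }`. -/
noncomputable def sigmaMod (ρ : ℝ → ℝ) (ε : ℝ) : ℝ :=
  sSup {r : ℝ | ∃ φ : ℝ → ℝ, ContDiff ℝ (⊤ : ℕ∞) φ ∧ HasCompactSupport φ ∧
    (∀ x, |φ x| ≤ ε) ∧ (∀ x, |deriv φ x| ≤ 1) ∧ r = ∫ s : ℝ, deriv φ s * ρ s}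

/-- The standard Gaussian measure on `ℝⁿ` (i.i.d. `N(0,1)` coordinates). -/
noncomputable def stdGaussian (n : ℕ) : Measure (Fin n → ℝ) :=
  Measure.pi fun _ => gaussianReal 0 1

/-- A (possibly degenerate) Gaussian distribution on `ℝⁿ`: the image of the standard
Gaussian measure under an affine map. -/
def IsGaussianVec {n : ℕ} (μ : Measure (Fin n → ℝ)) : Prop :=
  ∃ (L : (Fin n → ℝ) →ₗ[ℝ] (Fin n → ℝ)) (b : Fin n → ℝ),
    μ = (stdGaussian n).map (fun x => b + L x)

namespace GaussPoly

section TrigPoly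

open Polynomial Set
open scoped Real

/-- `P` represents `q` as a trigonometric polynomial of degree at most `k`: the coefficient of
`X ^ j` in `P` is the Fourier coefficient of `q` at the frequency `j - k`. -/
structure IsTrigRep (k : ℕ) (P : ℂ[X]) (q : ℝ → ℝ) : Prop where
  natDegree_le : P.natDegree ≤ 2 * k
  mul_pow_eq (t : ℝ) : (q t : ℂ) * circleMap 0 1 t ^ k = P.eval (circleMap 0 1 t)

/-- `q` is a real trigonometric polynomial of degree at most `k`. -/
def IsTrigPoly (k : ℕ) (q : ℝ → ℝ) : Prop := ∃ P, IsTrigRep k P q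

variable {k l : ℕ} {P Q : ℂ[X]} {q r : ℝ → ℝ}

lemma circleMap_unit_ne_zero (t : ℝ) : circleMap 0 1 t ≠ 0 := circleMap_ne_center one_ne_zero

lemma circleMap_unit_add_pi_div_two (t : ℝ) :
    circleMap 0 1 (t + π / 2) = Complex.I * circleMap 0 1 t := by
  rw [circleMap_zero, circleMap_zero, Complex.ofReal_add, add_mul, Complex.exp_add,
    Complex.ofReal_div, Complex.ofReal_ofNat, Complex.exp_pi_div_two_mul_I]
  ring

namespace IsTrigRep

lemma eq_re (h : IsTrigRep k P q) (t : ℝ) :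
    q t = (P.eval (circleMap 0 1 t) * (circleMap 0 1 t ^ k)⁻¹).re := by
  rw [← h.mul_pow_eq, mul_inv_cancel_right₀ (pow_ne_zero _ (circleMap_unit_ne_zero t)),
    Complex.ofReal_re]

lemma abs_eq_norm (h : IsTrigRep k P q) (t : ℝ) : |q t| = ‖P.eval (circleMap 0 1 t)‖ := by
  simp [← h.mul_pow_eq]

lemma add (hq : IsTrigRep k P q) (hr : IsTrigRep k Q r) :
    IsTrigRep k (P + Q) (fun t => q t + r t) where
  natDegree_le := natDegree_add_le_of_degree_le hq.natDegree_le hr.natDegree_le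
  mul_pow_eq t := by
    rw [eval_add, ← hq.mul_pow_eq, ← hr.mul_pow_eq]; push_cast; ring

lemma sub (hq : IsTrigRep k P q) (hr : IsTrigRep k Q r) :
    IsTrigRep k (P - Q) (fun t => q t - r t) where
  natDegree_le := (natDegree_sub_le_of_le hq.natDegree_le hr.natDegree_le).trans_eq (max_self _)
  mul_pow_eq t := by
    rw [eval_sub, ← hq.mul_pow_eq, ← hr.mul_pow_eq]; push_cast; ring

lemma mul (hq : IsTrigRep k P q) (hr : IsTrigRep l Q r) :
    IsTrigRep (k + l) (P * Q) (fun t => q t * r t) where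
  natDegree_le := (natDegree_mul_le_of_le hq.natDegree_le hr.natDegree_le).trans_eq (by ring)
  mul_pow_eq t := by
    rw [eval_mul, ← hq.mul_pow_eq, ← hr.mul_pow_eq]; push_cast; ring

lemma const (c : ℝ) : IsTrigRep 0 (C (c : ℂ)) (fun _ => c) where
  natDegree_le := by simp
  mul_pow_eq t := by simp

lemma cos_sin (a b : ℝ) : IsTrigRep 1
    (C ((a - b * Complex.I) / 2) * X ^ 2 + C ((a + b * Complex.I) / 2))
    (fun t => Real.cos t * a + Real.sin t * b) where
  natDegree_le := by compute_degree
  mul_pow_eq t := by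
    simp only [eval_add, eval_mul, eval_C, eval_pow, eval_X, circleMap, Complex.exp_mul_I]
    push_cast
    have h := Complex.sin_sq_add_cos_sq (t : ℂ)
    generalize Complex.sin t = s at *
    generalize Complex.cos t = c at *
    grind [Complex.I_sq]

lemma shift (h : IsTrigRep k P q) : IsTrigRep k (C ((-Complex.I) ^ k) * P.comp (C Complex.I * X))
    (fun t => q (t + π / 2)) where
  natDegree_le := by
    refine (natDegree_C_mul_le _ _).trans (natDegree_comp_le.trans ?_)
    rw [natDegree_C_mul_X _ Complex.I_ne_zero, mul_one]
    exact h.natDegree_le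
  mul_pow_eq t := by
    have hI : (-Complex.I) ^ k * Complex.I ^ k = 1 := by rw [← mul_pow]; simp
    rw [eval_mul, eval_comp, eval_mul, eval_C, eval_C, eval_X, ← circleMap_unit_add_pi_div_two,
      ← h.mul_pow_eq, circleMap_unit_add_pi_div_two, mul_pow]
    linear_combination -(q (t + π / 2) : ℂ) * circleMap 0 1 t ^ k * hI

lemma contDiff (h : IsTrigRep k P q) {n : WithTop ℕ∞} : ContDiff ℝ n q := by
  rw [funext h.eq_re]
  have hc : ContDiff ℝ n (circleMap 0 1) := contDiff_circleMap 0 1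
  refine Complex.reCLM.contDiff.comp (ContDiff.mul ?_ ?_)
  · simp only [eval_eq_sum_range]
    fun_prop
  · exact (hc.pow k).inv fun t => pow_ne_zero _ (circleMap_unit_ne_zero t)

lemma deriv (h : IsTrigRep k P q) :
    IsTrigRep k (C Complex.I * (X * derivative P - C (k : ℂ) * P)) (deriv q) where
  natDegree_le := by
    refine (natDegree_C_mul_le _ _).trans ((natDegree_sub_le_of_le (m := 2 * k) ?_
      ((natDegree_C_mul_le _ _).trans h.natDegree_le)).trans_eq (max_self _))
    rcases P.natDegree.eq_zero_or_pos with h0 | h0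
    · simp [derivative_of_natDegree_zero h0]
    · have h1 := natDegree_mul_le_of_le (natDegree_X_le (R := ℂ)) (natDegree_derivative_le P)
      have h2 := h.natDegree_le
      omega
  mul_pow_eq t := by
    have hq := ((h.contDiff.differentiable one_ne_zero t).hasDerivAt).ofReal_comp
    have he := hasDerivAt_circleMap 0 1 t
    have hprod := (hq.mul (he.fun_pow k)).unique
      (((P.hasDerivAt (circleMap 0 1 t)).comp t he).congr_of_eventuallyEq
        (Filter.Eventually.of_forall h.mul_pow_eq))
    have hpow : (k : ℂ) * circleMap 0 1 t ^ (k - 1) * circleMap 0 1 t =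
        k * circleMap 0 1 t ^ k := by
      rcases k with _ | k
      · simp
      · rw [Nat.add_sub_cancel, mul_assoc, ← pow_succ]
    simp only [eval_mul, eval_sub, eval_C, eval_X, ← h.mul_pow_eq]
    linear_combination hprod - q t * Complex.I * hpow

lemma norm_coeff_deriv (j : ℕ) :
    ‖(C Complex.I * (X * derivative P - C (k : ℂ) * P)).coeff j‖ = |(j : ℝ) - k| * ‖P.coeff j‖ := by
  have hcoeff : (X * derivative P - C (k : ℂ) * P).coeff j = ((j - k : ℝ) : ℂ) * P.coeff j := by
    rcases j with _ | j
    · simp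
    · simp only [coeff_sub, coeff_X_mul, coeff_derivative, coeff_C_mul]
      push_cast
      ring
  rw [coeff_C_mul, hcoeff, norm_mul, norm_mul, Complex.norm_I, one_mul, Complex.norm_real,
    Real.norm_eq_abs]

lemma coeff_shift (j : ℕ) : (C ((-Complex.I) ^ k) * P.comp (C Complex.I * X)).coeff j =
    P.coeff j * ((-Complex.I) ^ k * Complex.I ^ j) := by
  rw [coeff_C_mul, comp_C_mul_X_coeff]
  ring

lemma norm_coeff_shift (j : ℕ) :
    ‖(C ((-Complex.I) ^ k) * P.comp (C Complex.I * X)).coeff j‖ = ‖P.coeff j‖ := by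
  rw [coeff_shift]
  simp

end IsTrigRep

/-- The law of a uniformly distributed random angle in `(0, 2π]`. -/
noncomputable def angleMeasure : Measure ℝ := volume[|Ioc 0 (2 * π)]

instance : IsProbabilityMeasure angleMeasure :=
  cond_isProbabilityMeasure_of_finite
    (by simp [Real.pi_pos]) (by simp [ENNReal.mul_eq_top])

lemma integral_angleMeasure (f : ℝ → ℝ) :
    ∫ t, f t ∂angleMeasure = (2 * π)⁻¹ * ∫ t in (0)..(2 * π), f t := by
  rw [angleMeasure, ProbabilityTheory.cond, integral_smul_measure,
    intervalIntegral.integral_of_le (by positivity)]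
  simp [Real.pi_pos.le]

lemma integrable_angleMeasure {f : ℝ → ℝ} (hf : Continuous f) : Integrable f angleMeasure := by
  refine Integrable.smul_measure ?_ (by simp [Real.pi_pos])
  exact (hf.integrableOn_Icc (a := 0) (b := 2 * π)).mono_set Ioc_subset_Icc_self

lemma IsTrigRep.sum_support_eq_integral_sq (h : IsTrigRep k P q) :
    ∑ j ∈ P.support, ‖P.coeff j‖ ^ 2 = ∫ t, q t ^ 2 ∂angleMeasure := by
  simp only [P.sum_sq_norm_coeff_eq_circleAverage, Real.circleAverage_def, integral_angleMeasure,
    ← h.abs_eq_norm, sq_abs, smul_eq_mul]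

lemma IsTrigRep.integral_sq (h : IsTrigRep k P q) :
    ∫ t, q t ^ 2 ∂angleMeasure = ∑ j ∈ Finset.range (2 * k + 1), ‖P.coeff j‖ ^ 2 := by
  have hsupp : P.support ⊆ Finset.range (2 * k + 1) := fun j hj =>
    Finset.mem_range_succ_iff.2 ((le_natDegree_of_mem_supp j hj).trans h.natDegree_le)
  rw [← Finset.sum_subset hsupp fun j _ hj => by simp [notMem_support_iff.1 hj],
    h.sum_support_eq_integral_sq]

namespace IsTrigPoly

lemma const (c : ℝ) : IsTrigPoly 0 (fun _ => c) := ⟨_, .const c⟩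

lemma cos_sin (a b : ℝ) : IsTrigPoly 1 (fun t => Real.cos t * a + Real.sin t * b) :=
  ⟨_, .cos_sin a b⟩

lemma add (hq : IsTrigPoly k q) (hr : IsTrigPoly k r) : IsTrigPoly k (fun t => q t + r t) :=
  let ⟨_, hP⟩ := hq; let ⟨_, hQ⟩ := hr; ⟨_, hP.add hQ⟩

lemma sub (hq : IsTrigPoly k q) (hr : IsTrigPoly k r) : IsTrigPoly k (fun t => q t - r t) :=
  let ⟨_, hP⟩ := hq; let ⟨_, hQ⟩ := hr; ⟨_, hP.sub hQ⟩

lemma mul (hq : IsTrigPoly k q) (hr : IsTrigPoly l r) : IsTrigPoly (k + l) (fun t => q t * r t) :=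
  let ⟨_, hP⟩ := hq; let ⟨_, hQ⟩ := hr; ⟨_, hP.mul hQ⟩

lemma deriv (hq : IsTrigPoly k q) : IsTrigPoly k (deriv q) :=
  let ⟨_, hP⟩ := hq; ⟨_, hP.deriv⟩

lemma contDiff (hq : IsTrigPoly k q) {n : WithTop ℕ∞} : ContDiff ℝ n q :=
  let ⟨_, hP⟩ := hq; hP.contDiff

lemma continuous (hq : IsTrigPoly k q) : Continuous q := (hq.contDiff (n := 0)).continuous

lemma hasDerivAt (hq : IsTrigPoly k q) (t : ℝ) : HasDerivAt q (_root_.deriv q t) t :=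
  (hq.contDiff.differentiable one_ne_zero t).hasDerivAt

lemma const_mul (c : ℝ) (hq : IsTrigPoly k q) : IsTrigPoly k (fun t => c * q t) := by
  simpa only [zero_add] using (const c).mul hq

lemma mono (hkl : k ≤ l) (hq : IsTrigPoly k q) : IsTrigPoly l q := by
  obtain ⟨P, hP⟩ := hq
  refine ⟨P * X ^ (l - k), ?_, fun t => ?_⟩
  · refine (natDegree_mul_le_of_le hP.natDegree_le (natDegree_X_pow_le _)).trans ?_
    omega
  · rw [eval_mul, ← hP.mul_pow_eq, eval_pow, eval_X, mul_assoc, ← pow_add,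
      Nat.add_sub_cancel' hkl]

lemma sum {ι : Type*} (s : Finset ι) {q : ι → ℝ → ℝ} (h : ∀ i ∈ s, IsTrigPoly k (q i)) :
    IsTrigPoly k (fun t => ∑ i ∈ s, q i t) := by
  classical
  induction s using Finset.induction_on with
  | empty => simpa using (const 0).mono k.zero_le
  | insert i s hi ih =>
    simp only [Finset.sum_insert hi]
    exact (h i (s.mem_insert_self i)).add (ih fun j hj => h j (Finset.mem_insert_of_mem hj))

lemma prod {ι : Type*} (s : Finset ι) {q : ι → ℝ → ℝ} {k : ι → ℕ}
    (h : ∀ i ∈ s, IsTrigPoly (k i) (q i)) :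
    IsTrigPoly (∑ i ∈ s, k i) (fun t => ∏ i ∈ s, q i t) := by
  classical
  induction s using Finset.induction_on with
  | empty => simpa using const 1
  | insert i s hi ih =>
    simp only [Finset.prod_insert hi, Finset.sum_insert hi]
    exact (h i (s.mem_insert_self i)).mul (ih fun j hj => h j (Finset.mem_insert_of_mem hj))

lemma pow (hq : IsTrigPoly k q) (n : ℕ) : IsTrigPoly (n * k) (fun t => q t ^ n) := by
  simpa using prod (Finset.range n) fun _ _ => hq

/-- Pointwise bounds follow from Parseval's identity. -/
lemma sq_le_integral_sq (hq : IsTrigPoly k q) (t : ℝ) :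
    q t ^ 2 ≤ (2 * k + 1) * ∫ s, q s ^ 2 ∂angleMeasure := by
  obtain ⟨P, hP⟩ := hq
  have habs : |q t| ≤ ∑ j ∈ Finset.range (2 * k + 1), ‖P.coeff j‖ := by
    rw [hP.abs_eq_norm, eval_eq_sum_range' (Nat.lt_succ_of_le hP.natDegree_le)]
    exact norm_sum_le_of_le _ fun j _ => by simp
  calc q t ^ 2 ≤ (∑ j ∈ Finset.range (2 * k + 1), ‖P.coeff j‖) ^ 2 :=
        sq_le_sq' (neg_le_of_abs_le habs) (le_of_abs_le habs)
    _ ≤ (2 * k + 1) * ∑ j ∈ Finset.range (2 * k + 1), ‖P.coeff j‖ ^ 2 := by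
      simpa using sq_sum_le_card_mul_sum_sq (s := Finset.range (2 * k + 1))
        (f := fun j => ‖P.coeff j‖)
    _ = _ := by rw [hP.integral_sq]

lemma abs_le_integral_abs (hq : IsTrigPoly k q) (t : ℝ) :
    |q t| ≤ (2 * k + 1) * ∫ s, |q s| ∂angleMeasure := by
  set A := (2 * k + 1) * ∫ s, |q s| ∂angleMeasure
  have hbdd : BddAbove (range fun s => |q s|) :=
    ⟨_, forall_mem_range.2 fun s => Real.abs_le_sqrt (hq.sq_le_integral_sq s)⟩
  have hle (s : ℝ) : |q s| ≤ ⨆ s, |q s| := le_ciSup hbdd s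
  -- the mean of `q ^ 2` is at most the mean of `|q|` times the supremum `M` of `|q|`
  have hsq (s : ℝ) : q s ^ 2 ≤ A * ⨆ s, |q s| := by
    rw [mul_assoc, ← integral_mul_const]
    refine (hq.sq_le_integral_sq s).trans (mul_le_mul_of_nonneg_left (integral_mono
      (integrable_angleMeasure (hq.continuous.pow 2))
      (integrable_angleMeasure (hq.continuous.abs.mul continuous_const)) fun t => ?_)
      (by positivity))
    simp only [← sq_abs (q t), pow_two]
    gcongr
    exact hle t
  by_contra! hlt
  have hpos : 0 < ⨆ s, |q s| := (show 0 ≤ A by positivity).trans_lt (hlt.trans_le (hle t))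
  have hsup := (Real.le_sqrt' hpos).1 (ciSup_le fun s => Real.abs_le_sqrt (hsq s))
  nlinarith [hle t]

lemma integral_sq_le (hq : IsTrigPoly k q) :
    ∫ t, q t ^ 2 ∂angleMeasure ≤ (2 * k + 1) * (∫ t, |q t| ∂angleMeasure) ^ 2 := by
  rw [pow_two, ← mul_assoc, ← integral_const_mul]
  refine integral_mono (integrable_angleMeasure (hq.continuous.pow 2))
    (integrable_angleMeasure (continuous_const.mul hq.continuous.abs)) fun t => ?_
  simp only [← sq_abs (q t), pow_two]
  gcongr
  exact hq.abs_le_integral_abs t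

lemma integral_deriv_sq_le (hq : IsTrigPoly k q) :
    ∫ t, _root_.deriv q t ^ 2 ∂angleMeasure ≤ k ^ 2 * ∫ t, q t ^ 2 ∂angleMeasure := by
  obtain ⟨P, hP⟩ := hq
  rw [hP.deriv.integral_sq, hP.integral_sq, Finset.mul_sum]
  refine Finset.sum_le_sum fun j hj => ?_
  rw [IsTrigRep.norm_coeff_deriv, mul_pow, sq_abs]
  have hj : (j : ℝ) ≤ 2 * k := mod_cast Finset.mem_range_succ_iff.1 hj
  gcongr ?_ * _
  nlinarith [j.cast_nonneg (α := ℝ)]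

lemma integral_shift_sub_sq_le (hq : IsTrigPoly k q) :
    ∫ t, (q (t + π / 2) - q t) ^ 2 ∂angleMeasure ≤
      4 * ∫ t, _root_.deriv q t ^ 2 ∂angleMeasure := by
  obtain ⟨P, hP⟩ := hq
  rw [hP.deriv.integral_sq, (hP.shift.sub hP).integral_sq, Finset.mul_sum]
  refine Finset.sum_le_sum fun j _ => ?_
  rw [IsTrigRep.norm_coeff_deriv, coeff_sub]
  rcases eq_or_ne j k with rfl | hjk
  · rw [IsTrigRep.coeff_shift, ← mul_pow]
    simp
  · have hnorm := IsTrigRep.norm_coeff_shift (k := k) (P := P) j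
    have hdist : (1 : ℝ) ≤ |(j : ℝ) - k| := by
      exact_mod_cast Int.one_le_abs (sub_ne_zero.2 (Nat.cast_injective.ne hjk))
    calc _ ≤ (‖P.coeff j‖ + ‖P.coeff j‖) ^ 2 := by grw [norm_sub_le, hnorm]
      _ = 4 * (1 * ‖P.coeff j‖) ^ 2 := by ring
      _ ≤ 4 * (|(j : ℝ) - k| * ‖P.coeff j‖) ^ 2 := by gcongr

end IsTrigPoly

lemma IsTrigRep.mahlerMeasure_le (h : IsTrigRep k P q) :
    P.mahlerMeasure ≤ (2 * k + 1) * ∫ t, |q t| ∂angleMeasure := by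
  refine P.mahlerMeasure_le_sqrt_sum_sq_norm_coeff.trans ((Real.sqrt_le_left (by positivity)).2 ?_)
  rw [h.sum_support_eq_integral_sq, mul_pow]
  refine (IsTrigPoly.integral_sq_le ⟨P, h⟩).trans ?_
  gcongr
  nlinarith [k.cast_nonneg (α := ℝ)]

namespace IsTrigPoly

/-- The Mahler measure is multiplicative and controls every coefficient, so the coefficients of a
product of two polynomials control the products of their coefficients. -/
lemma integral_sq_le_integral_abs_mul_shift (hq : IsTrigPoly k q) :
    ∫ t, q t ^ 2 ∂angleMeasure ≤
      (2 * k).centralBinom * (4 * k + 1) * ∫ t, |q t * q (t + π / 2)| ∂angleMeasure := by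
  obtain ⟨P, hP⟩ := hq
  set R := C ((-Complex.I) ^ k) * P.comp (C Complex.I * X) with hR
  set J := ∫ t, |q t * q (t + π / 2)| ∂angleMeasure
  have hmahler : P.mahlerMeasure * R.mahlerMeasure ≤ (4 * k + 1) * J := by
    rw [← mahlerMeasure_mul]
    refine (hP.mul hP.shift).mahlerMeasure_le.trans_eq ?_
    push_cast
    ring
  have hcoeff (j : ℕ) : ‖P.coeff j‖ ^ 2 ≤ (2 * k).choose j ^ 2 * ((4 * k + 1) * J) := by
    have hchoose {Q : ℂ[X]} (hQ : Q.natDegree ≤ 2 * k) :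
        ‖Q.coeff j‖ ≤ (2 * k).choose j * Q.mahlerMeasure :=
      (norm_coeff_le_choose_mul_mahlerMeasure j Q).trans (by gcongr; exact Q.mahlerMeasure_nonneg)
    calc ‖P.coeff j‖ ^ 2 = ‖P.coeff j‖ * ‖R.coeff j‖ := by
          rw [hR, IsTrigRep.norm_coeff_shift, pow_two]
      _ ≤ ((2 * k).choose j * P.mahlerMeasure) * ((2 * k).choose j * R.mahlerMeasure) := by
        gcongr
        exacts [mul_nonneg (by positivity) P.mahlerMeasure_nonneg, hchoose hP.natDegree_le,
          hchoose hP.shift.natDegree_le]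
      _ = (2 * k).choose j ^ 2 * (P.mahlerMeasure * R.mahlerMeasure) := by ring
      _ ≤ _ := by gcongr
  calc ∫ t, q t ^ 2 ∂angleMeasure = ∑ j ∈ Finset.range (2 * k + 1), ‖P.coeff j‖ ^ 2 :=
        hP.integral_sq
    _ ≤ ∑ j ∈ Finset.range (2 * k + 1), (2 * k).choose j ^ 2 * ((4 * k + 1) * J) :=
      Finset.sum_le_sum fun j _ => hcoeff j
    _ = _ := by
      rw [← Finset.sum_mul, mul_assoc, Nat.centralBinom, ← Nat.sum_range_choose_sq]
      push_cast
      rfl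

lemma eq_zero_or_finite_zeros (hq : IsTrigPoly k q) : q = 0 ∨ ∃ Z : Finset ℝ, Z.card ≤ 2 * k ∧
    ∀ t ∈ Ioo 0 (2 * π), q t = 0 → t ∈ Z := by
  obtain ⟨P, hP⟩ := hq
  refine or_iff_not_imp_left.2 fun hq0 => ?_
  have hP0 : P ≠ 0 := by
    rintro rfl
    exact hq0 (funext fun t => by simpa using hP.abs_eq_norm t)
  have hmaps : MapsTo (circleMap 0 1) {t ∈ Ioo 0 (2 * π) | q t = 0} P.roots.toFinset :=
    fun t ht => by simp [hP0, ← hP.mul_pow_eq, ht.2]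
  have hinj : InjOn (circleMap 0 1) {t ∈ Ioo 0 (2 * π) | q t = 0} := fun s hs t ht =>
    eq_of_circleMap_eq one_ne_zero
      (abs_sub_lt_iff.2 ⟨by linarith [hs.1.2, ht.1.1], by linarith [ht.1.2, hs.1.1]⟩)
  have hfin := Finite.of_injOn hmaps hinj P.roots.toFinset.finite_toSet
  refine ⟨hfin.toFinset, ?_, fun t ht h0 => by simpa using ⟨ht, h0⟩⟩
  calc hfin.toFinset.card ≤ P.roots.toFinset.card :=
        Finset.card_le_card_of_injOn _ (by simpa using hmaps) (by simpa using hinj)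
    _ ≤ P.natDegree := (Multiset.toFinset_card_le _).trans P.card_roots'
    _ ≤ 2 * k := hP.natDegree_le

end IsTrigPoly

lemma integral_abs_deriv_le_of_ne_zero {w w' : ℝ → ℝ} {B : ℝ} (hw : ∀ t, HasDerivAt w (w' t) t)
    (hw' : Continuous w') (hB : ∀ t, |w t| ≤ B) {a b : ℝ} (hab : a ≤ b)
    (hne : ∀ t ∈ Ioo a b, w' t ≠ 0) : ∫ t in a..b, |w' t| ≤ 2 * B := by
  have hint : IntervalIntegrable (fun t => |w' t|) volume a b := hw'.abs.intervalIntegrable a b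
  have hftc : ∫ t in a..b, w' t = w b - w a :=
    intervalIntegral.integral_eq_sub_of_hasDerivAt (fun t _ => hw t) (hw'.intervalIntegrable a b)
  have hsign : (∀ t ∈ Ioo a b, 0 ≤ w' t) ∨ ∀ t ∈ Ioo a b, w' t ≤ 0 := by
    by_contra! h
    obtain ⟨⟨s, hs, hs0⟩, t, ht, ht0⟩ := h
    obtain ⟨c, hc, hc0⟩ :=
      isPreconnected_Ioo.intermediate_value hs ht hw'.continuousOn ⟨hs0.le, ht0.le⟩
    exact hne c hc hc0
  have ha := abs_le.1 (hB a)
  have hb := abs_le.1 (hB b)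
  rcases hsign with hpos | hneg
  · have := intervalIntegral.integral_mono_on_of_le_Ioo hab hint
      (hw'.intervalIntegrable a b) fun t ht => (abs_of_nonneg (hpos t ht)).le
    linarith
  · have := intervalIntegral.integral_mono_on_of_le_Ioo hab hint
      (hw'.neg.intervalIntegrable a b) fun t ht => (abs_of_nonpos (hneg t ht)).le
    simp only [Pi.neg_apply, intervalIntegral.integral_neg] at this
    linarith

/-- Each zero of `w'` splits the interval and at most doubles the bound. -/
lemma integral_abs_deriv_le {w w' : ℝ → ℝ} {B : ℝ} (hw : ∀ t, HasDerivAt w (w' t) t)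
    (hw' : Continuous w') (hB : ∀ t, |w t| ≤ B) (Z : Finset ℝ) {a b : ℝ} (hab : a ≤ b)
    (hZ : ∀ t ∈ Ioo a b, w' t = 0 → t ∈ Z) : ∫ t in a..b, |w' t| ≤ 2 ^ Z.card * (2 * B) := by
  classical
  have hint (x y : ℝ) : IntervalIntegrable (fun t => |w' t|) volume x y :=
    hw'.abs.intervalIntegrable x y
  induction Z using Finset.induction_on generalizing a b with
  | empty =>
    simpa using integral_abs_deriv_le_of_ne_zero hw hw' hB hab fun t ht h0 =>
      Finset.notMem_empty t (hZ t ht h0)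
  | insert c Z hc ih =>
    rw [Finset.card_insert_of_notMem hc, pow_succ]
    by_cases hcab : c ∈ Ioo a b
    · rw [← intervalIntegral.integral_add_adjacent_intervals (hint a c) (hint c b)]
      have hleft := ih hcab.1.le fun t ht h0 => Finset.mem_of_mem_insert_of_ne
        (hZ t ⟨ht.1, ht.2.trans hcab.2⟩ h0) ht.2.ne
      have hright := ih hcab.2.le fun t ht h0 => Finset.mem_of_mem_insert_of_ne
        (hZ t ⟨hcab.1.trans ht.1, ht.2⟩ h0) ht.1.ne'
      linarith
    · have hB0 : 0 ≤ B := (abs_nonneg _).trans (hB 0)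
      have hle := ih hab fun t ht h0 => Finset.mem_of_mem_insert_of_ne (hZ t ht h0)
        fun htc => hcab (htc ▸ ht)
      have : 0 ≤ 2 ^ Z.card * (2 * B) := by positivity
      linarith

lemma abs_integral_deriv_comp_mul_le {φ q q' w w' : ℝ → ℝ} {ε B : ℝ} (hφ : ContDiff ℝ 1 φ)
    (hφε : ∀ x, |φ x| ≤ ε) (hq : ∀ t, HasDerivAt q (q' t) t) (hq' : Continuous q')
    (hw : ∀ t, HasDerivAt w (w' t) t) (hw' : Continuous w') (hB : ∀ t, |w t| ≤ B) {a b : ℝ}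
    (hab : a ≤ b) :
    |∫ t in a..b, deriv φ (q t) * q' t * w t| ≤ ε * (2 * B + ∫ t in a..b, |w' t|) := by
  have hqc : Continuous q := continuous_iff_continuousAt.2 fun t => (hq t).continuousAt
  have hparts := intervalIntegral.integral_mul_deriv_eq_deriv_mul (a := a) (b := b)
    (fun t _ => hw t) (fun t _ => ((hφ.differentiable one_ne_zero _).hasDerivAt.comp t (hq t)))
    (hw'.intervalIntegrable a b)
    (((hφ.continuous_deriv le_rfl).comp hqc).mul hq' |>.intervalIntegrable a b)
  have hbdry (t : ℝ) : |w t * φ (q t)| ≤ B * ε := by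
    rw [abs_mul]
    exact mul_le_mul (hB t) (hφε _) (abs_nonneg _) ((abs_nonneg _).trans (hB t))
  have hrest : |∫ t in a..b, w' t * φ (q t)| ≤ ε * ∫ t in a..b, |w' t| := by
    refine (intervalIntegral.abs_integral_le_integral_abs hab).trans ?_
    rw [← intervalIntegral.integral_const_mul]
    refine intervalIntegral.integral_mono_on hab ?_ ?_ fun t _ => ?_
    · exact (hw'.mul (hφ.continuous.comp hqc)).abs.intervalIntegrable a b
    · exact (continuous_const.mul hw'.abs).intervalIntegrable a b
    · rw [abs_mul, mul_comm]
      gcongr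
      exact hφε _
  calc |∫ t in a..b, deriv φ (q t) * q' t * w t|
      = |w b * φ (q b) - w a * φ (q a) - ∫ t in a..b, w' t * φ (q t)| := by
        simpa only [mul_comm (w _), Function.comp_def] using congrArg abs hparts
    _ ≤ B * ε + B * ε + ε * ∫ t in a..b, |w' t| := by
      grw [abs_sub, abs_sub, hbdry, hbdry, hrest]
    _ = _ := by ring

lemma abs_div_sq_add_le {N δ : ℝ} (x : ℝ) (hN : 0 ≤ N) (hδ : 0 < δ) :
    |x / (x ^ 2 + N + δ ^ 2)| ≤ 1 / (2 * δ) := by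
  rw [abs_div, abs_of_pos (by positivity : 0 < x ^ 2 + N + δ ^ 2),
    div_le_div_iff₀ (by positivity) (by positivity)]
  nlinarith [sq_nonneg (|x| - δ), sq_abs x]

/-- The derivative of `p / (p ^ 2 + N + δ ^ 2)` has a trigonometric polynomial as numerator, so it
changes sign boundedly often. -/
lemma IsTrigPoly.exists_hasDerivAt_div {p N : ℝ → ℝ} {δ : ℝ} (hp : IsTrigPoly k p)
    (hN : IsTrigPoly l N) (hN0 : ∀ t, 0 ≤ N t) (hδ : 0 < δ) :
    ∃ w', Continuous w' ∧ (∀ t, HasDerivAt (fun t => p t / (p t ^ 2 + N t + δ ^ 2)) (w' t) t) ∧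
      ∫ t in (0)..(2 * π), |w' t| ≤ 2 ^ (6 * k + 2 * l) / δ := by
  have hDpos (t : ℝ) : 0 < p t ^ 2 + N t + δ ^ 2 := by have := hN0 t; positivity
  have hD : IsTrigPoly (2 * k + l) (fun t => p t ^ 2 + N t + δ ^ 2) :=
    (((hp.pow 2).mono (by omega)).add (hN.mono (by omega))).add ((const _).mono (by omega))
  set M : ℝ → ℝ := fun t => _root_.deriv p t * (p t ^ 2 + N t + δ ^ 2) -
    p t * _root_.deriv (fun t => p t ^ 2 + N t + δ ^ 2) t
  have hM : IsTrigPoly (3 * k + l) M :=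
    ((hp.deriv.mul hD).mono (by omega)).sub ((hp.mul hD.deriv).mono (by omega))
  have hw (t : ℝ) : HasDerivAt (fun t => p t / (p t ^ 2 + N t + δ ^ 2))
      (M t / (p t ^ 2 + N t + δ ^ 2) ^ 2) t :=
    (hp.hasDerivAt t).div (hD.hasDerivAt t) (hDpos t).ne'
  have hw' : Continuous fun t => M t / (p t ^ 2 + N t + δ ^ 2) ^ 2 :=
    hM.continuous.div (hD.continuous.pow 2) fun t => (pow_pos (hDpos t) 2).ne'
  refine ⟨_, hw', hw, ?_⟩
  rcases hM.eq_zero_or_finite_zeros with h0 | ⟨Z, hcard, hZ⟩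
  · simp only [h0, Pi.zero_apply, zero_div, abs_zero, intervalIntegral.integral_zero]
    positivity
  · calc _ ≤ 2 ^ Z.card * (2 * (1 / (2 * δ))) :=
        integral_abs_deriv_le hw hw' (fun t => abs_div_sq_add_le _ (hN0 t) hδ) Z (by positivity)
          fun t ht h0 => hZ t ht ((div_eq_zero_iff.1 h0).resolve_right (pow_pos (hDpos t) 2).ne')
      _ = 2 ^ Z.card / δ := by field_simp
      _ ≤ 2 ^ (6 * k + 2 * l) / δ := by
        gcongr
        · exact one_le_two
        · omega

/-- Integration by parts: `φ' ∘ q * q' = (φ ∘ q)'`, while the remaining factor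
`q' / (q' ^ 2 + N + δ ^ 2)` is bounded by `1 / (2 * δ)` and has bounded variation. -/
lemma IsTrigPoly.abs_integral_deriv_comp_le {N φ : ℝ → ℝ} {ε δ : ℝ} (hq : IsTrigPoly k q)
    (hN : IsTrigPoly l N) (hN0 : ∀ t, 0 ≤ N t) (hφ : ContDiff ℝ 1 φ) (hφε : ∀ x, |φ x| ≤ ε)
    (hδ : 0 < δ) :
    |∫ t, _root_.deriv φ (q t) * (_root_.deriv q t ^ 2 / (_root_.deriv q t ^ 2 + N t + δ ^ 2))
      ∂angleMeasure| ≤ 2 ^ (6 * k + 2 * l) * ε / δ := by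
  obtain ⟨w', hw', hw, hvar⟩ := hq.deriv.exists_hasDerivAt_div hN hN0 hδ
  have hε : 0 ≤ ε := (abs_nonneg _).trans (hφε 0)
  have hparts := abs_integral_deriv_comp_mul_le hφ hφε hq.hasDerivAt hq.deriv.continuous hw hw'
    (fun t => abs_div_sq_add_le _ (hN0 t) hδ) Real.two_pi_pos.le
  rw [integral_angleMeasure, abs_mul, abs_of_pos (by positivity : 0 < (2 * π)⁻¹),
    inv_mul_le_iff₀ Real.two_pi_pos]
  have hpow : (1 : ℝ) ≤ 2 ^ (6 * k + 2 * l) := one_le_pow₀ one_le_two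
  calc _ = |∫ t in (0)..(2 * π), _root_.deriv φ (q t) * _root_.deriv q t *
          (_root_.deriv q t / (_root_.deriv q t ^ 2 + N t + δ ^ 2))| := by
        congr! 3 with t
        ring
    _ ≤ ε * (2 * (1 / (2 * δ)) + 2 ^ (6 * k + 2 * l) / δ) := by grw [hparts, hvar]
    _ = (1 + 2 ^ (6 * k + 2 * l)) * (ε / δ) := by field_simp
    _ ≤ (2 * π * 2 ^ (6 * k + 2 * l)) * (ε / δ) := by
      gcongr
      nlinarith [Real.pi_gt_three]
    _ = _ := by ring

end TrigPoly

section GaussianVector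

open MvPolynomial

/-- The standard Gaussian measure on `ℝ^σ`, for a finite index type `σ`. -/
noncomputable abbrev gaussianPi (σ : Type*) [Fintype σ] : Measure (σ → ℝ) :=
  Measure.pi fun _ => gaussianReal 0 1

variable {σ : Type*} [Fintype σ]

instance : IsGaussian (gaussianPi σ) := by
  have h : (ProbabilityTheory.stdGaussian (EuclideanSpace ℝ σ)).map (EuclideanSpace.equiv σ ℝ) =
      gaussianPi σ := by
    rw [← map_pi_eq_stdGaussian, Measure.map_map (by fun_prop) (by fun_prop)]
    exact Measure.map_id
  rw [← h]
  infer_instance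

lemma integrable_pow_gaussianReal (n : ℕ) : Integrable (fun x : ℝ => x ^ n) (gaussianReal 0 1) :=
  (integrable_norm_iff (by fun_prop)).1 <| by
    simpa using (memLp_id_gaussianReal (μ := 0) (v := 1) n).integrable_norm_pow'

lemma integrable_eval (p : MvPolynomial σ ℝ) : Integrable (fun x => eval x p) (gaussianPi σ) := by
  simp only [eval_eq']
  exact integrable_finsetSum _ fun m _ =>
    (Integrable.fintype_prod fun i => integrable_pow_gaussianReal (m i)).const_mul _

lemma map_sum_mul_gaussianPi (v : σ → ℝ) :
    (gaussianPi σ).map (fun y => ∑ j, y j * v j) = gaussianReal 0 (∑ j, v j ^ 2).toNNReal := by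
  have h := IsGaussian.map_eq_gaussianReal (μ := ProbabilityTheory.stdGaussian (EuclideanSpace ℝ σ))
    (innerSL ℝ (WithLp.toLp 2 v))
  rw [integral_strongDual_stdGaussian, variance_dual_stdGaussian, innerSL_apply_norm,
    EuclideanSpace.real_norm_sq_eq, ← map_pi_eq_stdGaussian,
    Measure.map_map (by fun_prop) (by fun_prop)] at h
  convert h using 2
  ext y
  simp [PiLp.inner_apply]

lemma integral_sum_mul_sq_gaussianPi (v : σ → ℝ) :
    ∫ y, (∑ j, y j * v j) ^ 2 ∂gaussianPi σ = ∑ j, v j ^ 2 := by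
  have hvar := variance_fun_id_gaussianReal (μ := 0) (v := (∑ j, v j ^ 2).toNNReal)
  rw [variance_eq_integral (by fun_prop)] at hvar
  simp only [integral_id_gaussianReal, sub_zero] at hvar
  rw [← integral_map (f := fun z : ℝ => z ^ 2) (φ := fun y : σ → ℝ => ∑ j, y j * v j)
    (Measurable.aemeasurable (by fun_prop)) (by fun_prop), map_sum_mul_gaussianPi, hvar,
    Real.coe_toNNReal _ (Finset.sum_nonneg fun _ _ => sq_nonneg _)]

/-- The expectation of a polynomial in independent standard Gaussian variables. -/
noncomputable def expect : MvPolynomial σ ℝ →ₗ[ℝ] ℝ where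
  toFun p := ∫ x, eval x p ∂gaussianPi σ
  map_add' p q := by
    simp only [map_add]
    exact integral_add (integrable_eval p) (integrable_eval q)
  map_smul' a p := by
    simp only [smul_eval, RingHom.id_apply, smul_eq_mul]
    exact integral_const_mul _ _

lemma expect_apply (p : MvPolynomial σ ℝ) : expect p = ∫ x, eval x p ∂gaussianPi σ := rfl

lemma expect_C (a : ℝ) : expect (C a : MvPolynomial σ ℝ) = a := by simp [expect_apply]

lemma eval_eq_expect {p : MvPolynomial σ ℝ} (hp : p.totalDegree = 0) (x : σ → ℝ) :
    eval x p = expect p := by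
  rw [totalDegree_eq_zero_iff_eq_C.1 hp, eval_C, expect_C]

lemma expect_C_mul (a : ℝ) (p : MvPolynomial σ ℝ) : expect (C a * p) = a * expect p := by
  rw [← smul_eq_C_mul, map_smul, smul_eq_mul]

lemma expect_nonneg {p : MvPolynomial σ ℝ} (h : ∀ x, 0 ≤ eval x p) : 0 ≤ expect p :=
  integral_nonneg h

lemma expect_mono {p q : MvPolynomial σ ℝ} (h : ∀ x, eval x p ≤ eval x q) :
    expect p ≤ expect q := integral_mono (integrable_eval p) (integrable_eval q) h

/-- The rotation `(x, y) ↦ (cos t • x + sin t • y, -sin t • x + cos t • y)` of a pair of vectors. -/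
noncomputable abbrev rot (t : ℝ) : (σ → ℝ) × (σ → ℝ) →L[ℝ] (σ → ℝ) × (σ → ℝ) :=
  ContinuousLinearMap.rotation t

lemma rot_add_pi_div_two_fst (t : ℝ) (z : (σ → ℝ) × (σ → ℝ)) :
    (rot (t + Real.pi / 2) z).1 = (rot t z).2 := by
  simp [ContinuousLinearMap.rotation_apply, Real.cos_add_pi_div_two, Real.sin_add_pi_div_two]

lemma measurePreserving_rot (t : ℝ) : MeasurePreserving (rot t)
    ((gaussianPi σ).prod (gaussianPi σ)) ((gaussianPi σ).prod (gaussianPi σ)) := by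
  refine ⟨by fun_prop, IsGaussian.map_rotation_eq_self ?_ t⟩
  ext i
  rw [eval_integral fun i => by simpa using integrable_eval (X i)]
  simp [integral_eval]

lemma measurePreserving_rot_uncurry : MeasurePreserving (fun a : ℝ × _ => rot a.1 a.2)
    (angleMeasure.prod ((gaussianPi σ).prod (gaussianPi σ)))
    ((gaussianPi σ).prod (gaussianPi σ)) := by
  have hmeas : Measurable (Function.uncurry fun (t : ℝ) (z : (σ → ℝ) × (σ → ℝ)) => rot t z) := by
    simp only [Function.uncurry_def, ContinuousLinearMap.rotation_apply]
    fun_prop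
  exact measurePreserving_snd.comp ((MeasurePreserving.id angleMeasure).skew_product hmeas
    (.of_forall fun t => (measurePreserving_rot t).map_eq))

lemma integral_integral_rot {f : (σ → ℝ) × (σ → ℝ) → ℝ}
    (hf : Integrable f ((gaussianPi σ).prod (gaussianPi σ))) :
    (∫ z, ∫ t, f (rot t z) ∂angleMeasure ∂(gaussianPi σ).prod (gaussianPi σ)) =
      ∫ z, f z ∂(gaussianPi σ).prod (gaussianPi σ) := by
  have hrot := measurePreserving_rot_uncurry (σ := σ)
  rw [← integral_prod_symm (fun a : ℝ × (σ → ℝ) × (σ → ℝ) => f (rot a.1 a.2))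
    (hrot.integrable_comp_of_integrable hf), ← integral_map hrot.measurable.aemeasurable,
    hrot.map_eq]
  rw [hrot.map_eq]
  exact hf.aestronglyMeasurable

/-- Since `(x, y)` and its rotation by an independent uniform angle have the same law, inequalities
between circle averages integrate to inequalities between expectations. -/
lemma integral_le_integral_of_forall_rot {f g : (σ → ℝ) × (σ → ℝ) → ℝ}
    (hf : Integrable f ((gaussianPi σ).prod (gaussianPi σ)))
    (hg : Integrable g ((gaussianPi σ).prod (gaussianPi σ)))
    (h : ∀ z, ∫ t, f (rot t z) ∂angleMeasure ≤ ∫ t, g (rot t z) ∂angleMeasure) :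
    ∫ z, f z ∂(gaussianPi σ).prod (gaussianPi σ) ≤
      ∫ z, g z ∂(gaussianPi σ).prod (gaussianPi σ) := by
  have hrot := measurePreserving_rot_uncurry (σ := σ)
  rw [← integral_integral_rot hf, ← integral_integral_rot hg]
  exact integral_mono (hrot.integrable_comp_of_integrable hf).integral_prod_right
    (hrot.integrable_comp_of_integrable hg).integral_prod_right h

end GaussianVector

section Poincare

open MvPolynomial

variable {σ ι : Type*} {k : ℕ}

lemma totalDegree_pderiv_le (p : MvPolynomial σ ℝ) (i : σ) :
    (pderiv i p).totalDegree ≤ p.totalDegree - 1 := by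
  rw [p.as_sum, map_sum, ← p.as_sum]
  refine totalDegree_finsetSum_le fun m hm => ?_
  rw [pderiv_monomial]
  by_cases hmi : m i = 0
  · simp [hmi]
  · have hle : Finsupp.single i 1 ≤ m := by simpa [Nat.one_le_iff_ne_zero] using hmi
    have hdeg := congrArg Finsupp.degree (tsub_add_cancel_of_le hle)
    rw [map_add, Finsupp.degree_single] at hdeg
    have hm' : m.degree ≤ p.totalDegree := le_totalDegree hm
    refine (totalDegree_monomial_le _ _).trans ?_
    change (m - Finsupp.single i 1).degree ≤ _
    omega

/-- The gradient of a polynomial. -/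
noncomputable def grad (p : MvPolynomial σ ℝ) : σ → MvPolynomial σ ℝ := fun j => pderiv j p

/-- The family of all first partial derivatives of the members of a family of polynomials. -/
noncomputable def jacobian (F : ι → MvPolynomial σ ℝ) : ι × σ → MvPolynomial σ ℝ :=
  fun a => grad (F a.1) a.2

lemma totalDegree_grad_le {p : MvPolynomial σ ℝ} (hp : p.totalDegree ≤ k) (j : σ) :
    (grad p j).totalDegree ≤ k - 1 := (totalDegree_pderiv_le p j).trans (by omega)

lemma totalDegree_jacobian_le {F : ι → MvPolynomial σ ℝ} (hF : ∀ i, (F i).totalDegree ≤ k)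
    (a : ι × σ) : (jacobian F a).totalDegree ≤ k - 1 := totalDegree_grad_le (hF a.1) a.2

/-- The squared Euclidean norm of a finite family of polynomials. -/
noncomputable def normSq [Fintype ι] (F : ι → MvPolynomial σ ℝ) : MvPolynomial σ ℝ := ∑ i, F i ^ 2

lemma eval_normSq [Fintype ι] (F : ι → MvPolynomial σ ℝ) (x : σ → ℝ) :
    eval x (normSq F) = ∑ i, eval x (F i) ^ 2 := by simp [normSq]

lemma eval_normSq_nonneg [Fintype ι] (F : ι → MvPolynomial σ ℝ) (x : σ → ℝ) :
    0 ≤ eval x (normSq F) := by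
  rw [eval_normSq]
  positivity

lemma totalDegree_normSq_le [Fintype ι] {F : ι → MvPolynomial σ ℝ}
    (hF : ∀ i, (F i).totalDegree ≤ k) : (normSq F).totalDegree ≤ 2 * k :=
  totalDegree_finsetSum_le fun i _ =>
    (totalDegree_pow _ _).trans (Nat.mul_le_mul_left 2 (hF i))

variable [Fintype σ]

lemma normSq_jacobian [Fintype ι] (F : ι → MvPolynomial σ ℝ) :
    normSq (jacobian F) = ∑ i, normSq (grad (F i)) := Fintype.sum_prod_type _

/-- The derivative of the polynomial `p` at the point `z.1` in the direction `z.2`. -/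
noncomputable def dirDeriv (p : MvPolynomial σ ℝ) (z : (σ → ℝ) × (σ → ℝ)) : ℝ :=
  ∑ j, z.2 j * eval z.1 (grad p j)

lemma hasDerivAt_eval_rot (p : MvPolynomial σ ℝ) (z : (σ → ℝ) × (σ → ℝ)) (t : ℝ) :
    HasDerivAt (fun t => eval (rot t z).1 p) (dirDeriv p (rot t z)) t := by
  induction p using MvPolynomial.induction_on with
  | C a => simpa [dirDeriv, grad] using hasDerivAt_const t a
  | add p q hp hq =>
    simp only [map_add]
    refine (hp.add hq).congr_deriv ?_
    simp [dirDeriv, grad, mul_add, Finset.sum_add_distrib]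
  | mul_X p i hp =>
    have hcoord : HasDerivAt (fun t => (rot t z).1 i) ((rot t z).2 i) t := by
      simp only [ContinuousLinearMap.rotation_apply, Pi.add_apply, Pi.smul_apply, smul_eq_mul]
      exact ((Real.hasDerivAt_cos t).mul_const _).add ((Real.hasDerivAt_sin t).mul_const _)
    simp only [map_mul, eval_X]
    refine (hp.mul hcoord).congr_deriv ?_
    classical
    simp only [dirDeriv, grad, pderiv_mul, pderiv_X, map_add, map_mul, eval_X, mul_add,
      Finset.sum_add_distrib, Finset.sum_mul, Pi.single_apply, apply_ite (eval _), map_zero,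
      mul_ite, mul_one, mul_zero, Finset.sum_ite_eq, Finset.mem_univ, if_true]
    exact congrArg₂ _ (Finset.sum_congr rfl fun j _ => by ring) (mul_comm _ _)

lemma deriv_eval_rot (p : MvPolynomial σ ℝ) (z : (σ → ℝ) × (σ → ℝ)) :
    deriv (fun t => eval (rot t z).1 p) = fun t => dirDeriv p (rot t z) :=
  funext fun t => (hasDerivAt_eval_rot p z t).deriv

lemma isTrigPoly_eval_rot {p : MvPolynomial σ ℝ} (hp : p.totalDegree ≤ k)
    (z : (σ → ℝ) × (σ → ℝ)) : IsTrigPoly k (fun t => eval (rot t z).1 p) := by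
  simp only [eval_eq]
  refine IsTrigPoly.sum _ fun m hm => .const_mul _ ?_
  have hprod : IsTrigPoly (∑ i ∈ m.support, m i * 1)
      (fun t => ∏ i ∈ m.support, (rot t z).1 i ^ m i) :=
    .prod _ fun i _ => by
      simpa [ContinuousLinearMap.rotation_apply] using
        (IsTrigPoly.cos_sin (z.1 i) (z.2 i)).pow (m i)
  refine hprod.mono ?_
  simp only [mul_one]
  exact (le_totalDegree hm).trans hp

lemma integrable_eval_mul_eval (p q : MvPolynomial σ ℝ) :
    Integrable (fun z : (σ → ℝ) × (σ → ℝ) => eval z.1 p * eval z.2 q)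
      ((gaussianPi σ).prod (gaussianPi σ)) := (integrable_eval p).mul_prod (integrable_eval q)

lemma integral_eval_mul_eval (p q : MvPolynomial σ ℝ) :
    ∫ z : (σ → ℝ) × (σ → ℝ), eval z.1 p * eval z.2 q ∂(gaussianPi σ).prod (gaussianPi σ) =
      expect p * expect q :=
  integral_prod_mul (fun x => eval x p) (fun y => eval y q)

lemma integrable_dirDeriv_sq (p : MvPolynomial σ ℝ) :
    Integrable (fun z => dirDeriv p z ^ 2) ((gaussianPi σ).prod (gaussianPi σ)) := by
  simp only [dirDeriv, sq, Finset.sum_mul_sum]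
  refine integrable_finsetSum _ fun i _ => integrable_finsetSum _ fun j _ => ?_
  refine (integrable_eval_mul_eval (grad p i * grad p j) (X i * X j)).congr (.of_forall fun z => ?_)
  simp only [map_mul, eval_X]
  ring

lemma integral_dirDeriv_sq (p : MvPolynomial σ ℝ) :
    ∫ z, dirDeriv p z ^ 2 ∂(gaussianPi σ).prod (gaussianPi σ) = expect (normSq (grad p)) := by
  rw [integral_prod _ (integrable_dirDeriv_sq p)]
  simp only [dirDeriv, integral_sum_mul_sq_gaussianPi, expect_apply, eval_normSq]

lemma expect_sub_expect_sq (p : MvPolynomial σ ℝ) :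
    expect ((p - C (expect p)) ^ 2) = expect (p ^ 2) - expect p ^ 2 := by
  have hexpand : (p - C (expect p)) ^ 2 =
      p ^ 2 - C (2 * expect p) * p + C (expect p ^ 2) := by
    simp only [map_mul, map_pow, map_ofNat]
    ring
  rw [hexpand, map_add, map_sub, expect_C_mul, expect_C]
  ring

lemma integral_eval_sub_sq (p : MvPolynomial σ ℝ) :
    Integrable (fun z : (σ → ℝ) × (σ → ℝ) => (eval z.2 p - eval z.1 p) ^ 2)
        ((gaussianPi σ).prod (gaussianPi σ)) ∧
      ∫ z : (σ → ℝ) × (σ → ℝ), (eval z.2 p - eval z.1 p) ^ 2 ∂(gaussianPi σ).prod (gaussianPi σ) =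
        2 * expect ((p - C (expect p)) ^ 2) := by
  have hexpand (z : (σ → ℝ) × (σ → ℝ)) : (eval z.2 p - eval z.1 p) ^ 2 =
      eval z.1 (p ^ 2) * eval z.2 1 + eval z.1 1 * eval z.2 (p ^ 2) -
        2 * (eval z.1 p * eval z.2 p) := by
    simp only [map_pow, map_one]
    ring
  have hx := integrable_eval_mul_eval (p ^ 2) 1
  have hy := integrable_eval_mul_eval 1 (p ^ 2)
  have hxy := (integrable_eval_mul_eval p p).const_mul 2
  simp only [hexpand]
  refine ⟨(hx.add hy).sub hxy, ?_⟩
  rw [integral_sub (hx.fun_add hy) hxy, integral_add hx hy, integral_const_mul,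
    integral_eval_mul_eval, integral_eval_mul_eval, integral_eval_mul_eval, expect_sub_expect_sq,
    ← map_one C, expect_C]
  ring

/-- Poincaré inequality: the Gaussian average of the corresponding inequality on circles. -/
lemma expect_sub_expect_sq_le (p : MvPolynomial σ ℝ) :
    expect ((p - C (expect p)) ^ 2) ≤ 2 * expect (normSq (grad p)) := by
  obtain ⟨hint, heq⟩ := integral_eval_sub_sq p
  have h := integral_le_integral_of_forall_rot hint ((integrable_dirDeriv_sq p).const_mul 4)
    fun z => by
      have hcircle := (isTrigPoly_eval_rot le_rfl z : IsTrigPoly p.totalDegree _)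
        |>.integral_shift_sub_sq_le
      simpa only [deriv_eval_rot, rot_add_pi_div_two_fst, integral_const_mul] using hcircle
  rw [heq, integral_const_mul, integral_dirDeriv_sq] at h
  linarith

/-- Reverse Poincaré inequality: the Gaussian average of the corresponding inequality on circles. -/
lemma expect_normSq_grad_le {p : MvPolynomial σ ℝ} (hp : p.totalDegree ≤ k) :
    expect (normSq (grad p)) ≤ k ^ 2 * expect (p ^ 2) := by
  have hsq : Integrable (fun z : (σ → ℝ) × (σ → ℝ) => eval z.1 (p ^ 2))
      ((gaussianPi σ).prod (gaussianPi σ)) := (integrable_eval (p ^ 2)).comp_fst _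
  have h := integral_le_integral_of_forall_rot (integrable_dirDeriv_sq p)
    (hsq.const_mul (k ^ 2)) fun z => by
      have hcircle := (isTrigPoly_eval_rot hp z).integral_deriv_sq_le
      simpa only [deriv_eval_rot, integral_const_mul, map_pow] using hcircle
  rwa [integral_dirDeriv_sq, integral_const_mul, integral_fun_fst (fun x => eval x (p ^ 2)),
    probReal_univ, one_smul, ← expect_apply] at h

lemma expect_normSq [Fintype ι] (F : ι → MvPolynomial σ ℝ) :
    expect (normSq F) = ∑ i, expect (F i ^ 2) := map_sum _ _ _

lemma expect_normSq_sub_expect_le [Fintype ι] (F : ι → MvPolynomial σ ℝ) :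
    expect (normSq fun i => F i - C (expect (F i))) ≤ 2 * expect (normSq (jacobian F)) := by
  rw [normSq_jacobian, map_sum, Finset.mul_sum, expect_normSq]
  exact Finset.sum_le_sum fun i _ => expect_sub_expect_sq_le (F i)

lemma expect_normSq_jacobian_le [Fintype ι] {F : ι → MvPolynomial σ ℝ}
    (hF : ∀ i, (F i).totalDegree ≤ k) :
    expect (normSq (jacobian F)) ≤ k ^ 2 * expect (normSq F) := by
  rw [normSq_jacobian, map_sum, expect_normSq, Finset.mul_sum]
  exact Finset.sum_le_sum fun i _ => expect_normSq_grad_le (hF i)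

end Poincare

section ReverseHolder

open MvPolynomial

variable {σ ι : Type*} [Fintype σ] [Fintype ι] {k : ℕ}

/-- The constant in the reverse Hölder inequality for polynomials of degree at most `k`. -/
noncomputable def holderConst (k : ℕ) : ℝ := (2 * k).centralBinom * (4 * k + 1)

lemma holderConst_pos (k : ℕ) : 0 < holderConst k :=
  mul_pos (by exact_mod_cast Nat.centralBinom_pos _) (by positivity)

/-- Reverse Hölder inequality: the Gaussian average of the corresponding inequality on circles. -/
lemma expect_sq_le {p : MvPolynomial σ ℝ} (hp : p.totalDegree ≤ k) (hp0 : ∀ x, 0 ≤ eval x p) :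
    expect (p ^ 2) ≤ holderConst k * expect p ^ 2 := by
  have hsq : Integrable (fun z : (σ → ℝ) × (σ → ℝ) => eval z.1 (p ^ 2))
      ((gaussianPi σ).prod (gaussianPi σ)) := (integrable_eval (p ^ 2)).comp_fst _
  have h := integral_le_integral_of_forall_rot hsq
    ((integrable_eval_mul_eval p p).const_mul (holderConst k)) fun z => by
      have hcircle := (isTrigPoly_eval_rot hp z).integral_sq_le_integral_abs_mul_shift
      simpa only [rot_add_pi_div_two_fst, integral_const_mul, map_pow, abs_mul,
        abs_of_nonneg (hp0 _), holderConst] using hcircle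
  rwa [integral_const_mul, integral_eval_mul_eval, integral_fun_fst (fun x => eval x (p ^ 2)),
    probReal_univ, one_smul, ← expect_apply, ← sq] at h

lemma expect_mul_le_of_le {p r : MvPolynomial σ ℝ} {a b : ℝ} (hp : p.totalDegree ≤ k)
    (hr : r.totalDegree ≤ k) (hp0 : ∀ x, 0 ≤ eval x p) (hr0 : ∀ x, 0 ≤ eval x r)
    (ha : 0 < a) (hb : 0 < b) (hpa : expect p ≤ a) (hrb : expect r ≤ b) :
    expect (p * r) ≤ holderConst k * (a * b) := by
  have hdeg : (C b * p + C a * r).totalDegree ≤ k := by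
    refine (totalDegree_add _ _).trans (max_le ?_ ?_) <;>
      exact (totalDegree_mul _ _).trans (by simpa)
  have hpos (x : σ → ℝ) : 0 ≤ eval x (C b * p + C a * r) := by
    simp only [map_add, map_mul, eval_C]
    have := hp0 x
    have := hr0 x
    positivity
  have hmean0 := expect_nonneg hpos
  have hmean : expect (C b * p + C a * r) ≤ 2 * (a * b) := by
    rw [map_add, expect_C_mul, expect_C_mul]
    nlinarith
  have hcross : expect (C (4 * a * b) * (p * r)) ≤ expect ((C b * p + C a * r) ^ 2) :=
    expect_mono fun x => by
      simp only [map_add, map_mul, map_pow, eval_C]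
      linarith [sq_nonneg (b * eval x p - a * eval x r)]
  refine le_of_mul_le_mul_left ?_ (by positivity : 0 < 4 * a * b)
  calc 4 * a * b * expect (p * r) ≤ expect ((C b * p + C a * r) ^ 2) := by rwa [← expect_C_mul]
    _ ≤ holderConst k * (2 * (a * b)) ^ 2 := by
      have := holderConst_pos k
      grw [expect_sq_le hdeg hpos, hmean]
    _ = 4 * a * b * (holderConst k * (a * b)) := by ring

lemma expect_mul_le {p r : MvPolynomial σ ℝ} (hp : p.totalDegree ≤ k) (hr : r.totalDegree ≤ k)
    (hp0 : ∀ x, 0 ≤ eval x p) (hr0 : ∀ x, 0 ≤ eval x r) :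
    expect (p * r) ≤ holderConst k * (expect p * expect r) := by
  have hlim : Filter.Tendsto (fun η => holderConst k * ((expect p + η) * (expect r + η)))
      (nhdsWithin 0 (Set.Ioi 0)) (nhds (holderConst k * (expect p * expect r))) :=
    tendsto_nhdsWithin_of_tendsto_nhds (Continuous.tendsto' (by fun_prop) _ _ (by simp))
  refine ge_of_tendsto hlim (eventually_nhdsWithin_of_forall fun η (hη : 0 < η) => ?_)
  have := expect_nonneg hp0
  have := expect_nonneg hr0
  exact expect_mul_le_of_le hp hr hp0 hr0 (by positivity) (by positivity) (by linarith)
    (by linarith)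

lemma integrable_eval_mul_of_abs_le {b : (σ → ℝ) → ℝ} {B : ℝ} (W : MvPolynomial σ ℝ)
    (hb : Continuous b) (hB : ∀ x, |b x| ≤ B) :
    Integrable (fun x => eval x W * b x) (gaussianPi σ) :=
  (integrable_eval W).mul_bdd hb.aestronglyMeasurable (.of_forall hB)

lemma expect_mul_denominator_le {p r : MvPolynomial σ ℝ} (hp : p.totalDegree ≤ k)
    (hr : r.totalDegree ≤ k) (hp0 : ∀ x, 0 ≤ eval x p) (hr0 : ∀ x, 0 ≤ eval x r) (s δ : ℝ) :
    expect (p * ((r + C (s ^ 2)) * (p + C (δ ^ 2)))) ≤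
      holderConst (2 * k) ^ 2 * ((expect r + s ^ 2) * (expect p + δ ^ 2)) * expect p := by
  have := holderConst_pos (2 * k)
  have := expect_nonneg hr0
  have hdeg {q : MvPolynomial σ ℝ} (hq : q.totalDegree ≤ k) (a : ℝ) :
      (q + C (a ^ 2)).totalDegree ≤ k := (totalDegree_add _ _).trans
    (max_le hq ((totalDegree_C _).trans_le zero_le))
  have hpos {q : MvPolynomial σ ℝ} (hq : ∀ x, 0 ≤ eval x q) (a : ℝ) (x : σ → ℝ) :
      0 ≤ eval x (q + C (a ^ 2)) := by
    rw [map_add, eval_C]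
    exact add_nonneg (hq x) (sq_nonneg a)
  have hp_add := expect_mul_le (k := 2 * k) (hp.trans (by omega)) ((hdeg hp δ).trans (by omega))
    hp0 (hpos hp0 δ)
  have hprod := expect_mul_le (k := 2 * k)
    ((totalDegree_mul _ _).trans ((add_le_add hp (hdeg hp δ)).trans (by omega)))
    ((hdeg hr s).trans (by omega))
    (fun x => by rw [map_mul]; exact mul_nonneg (hp0 x) (hpos hp0 δ x)) (hpos hr0 s)
  rw [map_add, expect_C] at hp_add
  rw [map_add expect r, expect_C] at hprod
  calc expect (p * ((r + C (s ^ 2)) * (p + C (δ ^ 2))))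
      = expect (p * (p + C (δ ^ 2)) * (r + C (s ^ 2))) := by ring_nf
    _ ≤ holderConst (2 * k) * (expect (p * (p + C (δ ^ 2))) * (expect r + s ^ 2)) := hprod
    _ ≤ holderConst (2 * k) *
        (holderConst (2 * k) * (expect p * (expect p + δ ^ 2)) * (expect r + s ^ 2)) := by gcongr
    _ = _ := by ring

lemma expect_le_mul_integral_div {p h : MvPolynomial σ ℝ} {c M : ℝ} (hp0 : ∀ x, 0 ≤ eval x p)
    (hc : 0 < c) (hh : ∀ x, c ≤ eval x h) (hM : 0 < M) (hph : expect (p * h) ≤ M * expect p) :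
    expect p ≤ M * ∫ x, eval x p / eval x h ∂gaussianPi σ := by
  have hint : Integrable (fun x => eval x p / eval x h) (gaussianPi σ) := by
    simp only [div_eq_mul_inv]
    refine integrable_eval_mul_of_abs_le (B := c⁻¹) p
      ((continuous_eval h).inv₀ fun x => (hc.trans_le (hh x)).ne') fun x => ?_
    rw [abs_of_pos (inv_pos.2 (hc.trans_le (hh x)))]
    exact inv_anti₀ hc (hh x)
  have hpointwise (x : σ → ℝ) :
      eval x (C (2 * M⁻¹) * p - C (M⁻¹ ^ 2) * (p * h)) ≤ eval x p / eval x h := by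
    rw [le_div_iff₀ (hc.trans_le (hh x))]
    simp only [map_sub, map_mul, map_pow, eval_C]
    linarith [mul_nonneg (hp0 x) (sq_nonneg (M⁻¹ * eval x h - 1))]
  have hle := integral_mono (integrable_eval _) hint hpointwise
  rw [← expect_apply, map_sub, expect_C_mul, expect_C_mul] at hle
  calc expect p = M * (2 * M⁻¹ * expect p - M⁻¹ ^ 2 * (M * expect p)) := by field_simp; ring
    _ ≤ M * (2 * M⁻¹ * expect p - M⁻¹ ^ 2 * expect (p * h)) := by gcongr
    _ ≤ _ := by gcongr

/-- This is the Cauchy-Schwarz inequality `(E p) ^ 2 ≤ E (p / h) * E (p * h)`, where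
`h = (r + s ^ 2) * (p + δ ^ 2)` and the last factor is bounded by the reverse Hölder inequality. -/
lemma expect_div_le_integral {p r : MvPolynomial σ ℝ} {s δ : ℝ} (hp : p.totalDegree ≤ k)
    (hr : r.totalDegree ≤ k) (hp0 : ∀ x, 0 ≤ eval x p) (hr0 : ∀ x, 0 ≤ eval x r) (hs : 0 < s)
    (hδ : 0 < δ) :
    expect p / ((expect r + s ^ 2) * (expect p + δ ^ 2)) ≤ holderConst (2 * k) ^ 2 *
      ∫ x, eval x p / ((eval x r + s ^ 2) * (eval x p + δ ^ 2)) ∂gaussianPi σ := by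
  have := holderConst_pos (2 * k)
  have := expect_nonneg hp0
  have := expect_nonneg hr0
  have eval_h (x : σ → ℝ) : eval x ((r + C (s ^ 2)) * (p + C (δ ^ 2))) =
      (eval x r + s ^ 2) * (eval x p + δ ^ 2) := by simp
  have h := expect_le_mul_integral_div hp0 (by positivity : 0 < s ^ 2 * δ ^ 2)
    (fun x => by
      rw [eval_h]
      exact mul_le_mul (le_add_of_nonneg_left (hr0 x)) (le_add_of_nonneg_left (hp0 x))
        (sq_nonneg δ) (add_nonneg (hr0 x) (sq_nonneg s)))
    (by positivity) (expect_mul_denominator_le hp hr hp0 hr0 s δ)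
  simp only [eval_h] at h
  rw [div_le_iff₀ (by positivity)]
  linarith

end ReverseHolder

section Slab

open MvPolynomial

variable {σ ι : Type*} [Fintype ι] {k l : ℕ} {s δ : ℝ}

lemma integral_deriv_sq_div_le {q : ℝ → ℝ} (hq : IsTrigPoly k q) (hs : 0 < s) (hδ : 0 < δ) :
    ∫ t, deriv q t ^ 2 / ((q t ^ 2 + s ^ 2) * (deriv q t ^ 2 + δ ^ 2)) ∂angleMeasure ≤
      2 ^ (6 * k + 1) / (s * δ) := by
  set φ : ℝ → ℝ := fun x => s⁻¹ * Real.arctan (s⁻¹ * x) with hφ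
  have hderiv (x : ℝ) : deriv φ x = (x ^ 2 + s ^ 2)⁻¹ := by
    refine (((hasDerivAt_id' x).const_mul s⁻¹).arctan.const_mul s⁻¹).deriv.trans ?_
    field_simp
    ring
  have hφ_le (x : ℝ) : |φ x| ≤ s⁻¹ * 2 := by
    rw [hφ, abs_mul, abs_of_pos (inv_pos.2 hs)]
    gcongr
    exact abs_le.2 ⟨by linarith [Real.neg_pi_div_two_lt_arctan (s⁻¹ * x), Real.pi_le_four],
      by linarith [Real.arctan_lt_pi_div_two (s⁻¹ * x), Real.pi_le_four]⟩
  have h := hq.abs_integral_deriv_comp_le (IsTrigPoly.const 0) (fun _ => le_rfl)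
    (contDiff_const.mul (contDiff_const.mul contDiff_id).arctan) hφ_le hδ
  calc _ = ∫ t, deriv φ (q t) * (deriv q t ^ 2 / (deriv q t ^ 2 + 0 + δ ^ 2)) ∂angleMeasure := by
        refine integral_congr_ae (.of_forall fun t => ?_)
        simp only [hderiv, add_zero]
        field_simp
    _ ≤ 2 ^ (6 * k + 2 * 0) * (s⁻¹ * 2) / δ := (le_abs_self _).trans h
    _ = 2 ^ (6 * k + 1) / (s * δ) := by field_simp; ring

lemma IsTrigPoly.integral_mul_le {w f : ℝ → ℝ} (hw : IsTrigPoly l w) (hw0 : ∀ t, 0 ≤ w t)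
    (hf : Continuous f) (hf0 : ∀ t, 0 ≤ f t) :
    ∫ t, w t * f t ∂angleMeasure ≤
      (2 * l + 1) * (∫ t, w t ∂angleMeasure) * ∫ t, f t ∂angleMeasure := by
  rw [← integral_const_mul]
  refine integral_mono (integrable_angleMeasure (hw.continuous.mul hf))
    (integrable_angleMeasure (hf.const_mul _)) fun t => mul_le_mul_of_nonneg_right ?_ (hf0 t)
  simpa only [abs_of_nonneg (hw0 _)] using hw.abs_le_integral_abs t

/-- The linear form with coefficients `v`. -/
noncomputable def linForm (v : ι → ℝ) : MvPolynomial ι ℝ := ∑ i, C (v i) * X i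

lemma eval_linForm (v y : ι → ℝ) : eval y (linForm v) = ∑ i, y i * v i := by
  simp [linForm, mul_comm]

lemma totalDegree_linForm_sq_le (v : ι → ℝ) : (linForm v ^ 2).totalDegree ≤ 2 := by
  have h : (linForm v).totalDegree ≤ 1 :=
    totalDegree_finsetSum_le fun i _ => (totalDegree_mul _ _).trans (by simp)
  exact (totalDegree_pow _ _).trans (Nat.mul_le_mul_left 2 h)

lemma expect_linForm_sq (v : ι → ℝ) : expect (linForm v ^ 2) = ∑ i, v i ^ 2 := by
  simp only [expect_apply, map_pow, eval_linForm, integral_sum_mul_sq_gaussianPi]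

lemma abs_div_mul_le {a b : ℝ} (ha : 0 ≤ a) (hb : 0 ≤ b) (hs : 0 < s) (hδ : 0 < δ) :
    |a / ((b + s ^ 2) * (a + δ ^ 2))| ≤ (s ^ 2)⁻¹ := by
  rw [abs_of_nonneg (by positivity), div_le_iff₀ (by positivity), inv_mul_eq_div,
    le_div_iff₀ (by positivity)]
  nlinarith [mul_nonneg ha hb, mul_nonneg hb (sq_nonneg δ), mul_nonneg (sq_nonneg s) (sq_nonneg δ)]

/-- The scalar bound, applied to a random Gaussian combination of the `q i`. -/
lemma integral_sum_deriv_sq_div_le {q : ι → ℝ → ℝ} (hq : ∀ i, IsTrigPoly k (q i)) (hs : 0 < s)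
    (hδ : 0 < δ) :
    ∫ t, (∑ i, deriv (q i) t ^ 2) /
        ((∑ i, q i t ^ 2 + s ^ 2) * (∑ i, deriv (q i) t ^ 2 + δ ^ 2)) ∂angleMeasure ≤
      holderConst 4 ^ 2 * (2 ^ (6 * k + 1) / (s * δ)) := by
  have hqc (i : ι) : Continuous (q i) := (hq i).continuous
  have hqc' (i : ι) : Continuous (deriv (q i)) := (hq i).deriv.continuous
  set G : ℝ × (ι → ℝ) → ℝ := fun a => (∑ i, a.2 i * deriv (q i) a.1) ^ 2 /
    (((∑ i, a.2 i * q i a.1) ^ 2 + s ^ 2) * ((∑ i, a.2 i * deriv (q i) a.1) ^ 2 + δ ^ 2))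
  have hGint : Integrable G (angleMeasure.prod (gaussianPi ι)) := by
    refine .of_bound (Continuous.aestronglyMeasurable ?_) (s ^ 2)⁻¹
      (.of_forall fun a => abs_div_mul_le (sq_nonneg _) (sq_nonneg _) hs hδ)
    exact .div (by fun_prop) (by fun_prop) fun a => by positivity
  have hpointwise (t : ℝ) : (∑ i, deriv (q i) t ^ 2) /
      ((∑ i, q i t ^ 2 + s ^ 2) * (∑ i, deriv (q i) t ^ 2 + δ ^ 2)) ≤
        holderConst 4 ^ 2 * ∫ θ, G (t, θ) ∂gaussianPi ι := by
    simpa only [expect_linForm_sq, map_pow, eval_linForm] using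
      expect_div_le_integral (totalDegree_linForm_sq_le fun i => deriv (q i) t)
        (totalDegree_linForm_sq_le fun i => q i t) (fun θ => by rw [map_pow]; positivity)
        (fun θ => by rw [map_pow]; positivity) hs hδ
  have hcombination (θ : ι → ℝ) :
      ∫ t, G (t, θ) ∂angleMeasure ≤ 2 ^ (6 * k + 1) / (s * δ) := by
    have hsum : IsTrigPoly k (fun t => ∑ i, θ i * q i t) := .sum _ fun i _ => (hq i).const_mul _
    have hderiv : deriv (fun t => ∑ i, θ i * q i t) = fun t => ∑ i, θ i * deriv (q i) t :=
      funext fun t => (HasDerivAt.fun_sum fun i _ => ((hq i).hasDerivAt t).const_mul (θ i)).deriv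
    simpa only [hderiv] using integral_deriv_sq_div_le hsum hs hδ
  calc _ ≤ ∫ t, holderConst 4 ^ 2 * ∫ θ, G (t, θ) ∂gaussianPi ι ∂angleMeasure := by
        refine integral_mono (integrable_angleMeasure ?_) (hGint.integral_prod_left.const_mul _)
          hpointwise
        exact .div (by fun_prop) (by fun_prop) fun t => by positivity
    _ = holderConst 4 ^ 2 * ∫ θ, ∫ t, G (t, θ) ∂angleMeasure ∂gaussianPi ι := by
        rw [integral_const_mul, integral_integral_swap hGint]
    _ ≤ holderConst 4 ^ 2 * (2 ^ (6 * k + 1) / (s * δ)) := by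
        gcongr
        exact (integral_mono hGint.integral_prod_right (integrable_const _) hcombination).trans_eq
          (by simp)

variable [Fintype σ] {F : ι → MvPolynomial σ ℝ} {W : MvPolynomial σ ℝ}

lemma eval_normSq_jacobian (F : ι → MvPolynomial σ ℝ) (x : σ → ℝ) :
    eval x (normSq (jacobian F)) = ∑ i, ∑ j, eval x (grad (F i) j) ^ 2 := by
  simp only [normSq_jacobian, map_sum, eval_normSq]

lemma eval_normSq_jacobian_div_le (F : ι → MvPolynomial σ ℝ) (x : σ → ℝ) (hs : 0 < s)
    (hδ : 0 < δ) :
    eval x (normSq (jacobian F)) /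
        ((eval x (normSq F) + s ^ 2) * (eval x (normSq (jacobian F)) + δ ^ 2)) ≤
      holderConst 4 ^ 2 * ∫ y, (∑ i, dirDeriv (F i) (x, y) ^ 2) /
        ((eval x (normSq F) + s ^ 2) * (∑ i, dirDeriv (F i) (x, y) ^ 2 + δ ^ 2)) ∂gaussianPi σ := by
  set p : MvPolynomial σ ℝ := ∑ i, linForm (fun j => eval x (grad (F i) j)) ^ 2
  have hp : expect p = eval x (normSq (jacobian F)) := by
    simp only [p, map_sum, expect_linForm_sq, eval_normSq_jacobian]
  have eval_p (y : σ → ℝ) : eval y p = ∑ i, dirDeriv (F i) (x, y) ^ 2 := by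
    simp only [p, map_sum, map_pow, eval_linForm, dirDeriv]
  have hdeg : p.totalDegree ≤ 2 := totalDegree_finsetSum_le fun i _ => totalDegree_linForm_sq_le _
  simpa only [expect_C, eval_C, hp, eval_p] using
    expect_div_le_integral (r := C (eval x (normSq F))) hdeg (by simp)
      (fun y => by rw [eval_p]; positivity) (fun y => by simpa using eval_normSq_nonneg F x) hs hδ

lemma continuous_dirDeriv (p : MvPolynomial σ ℝ) : Continuous (dirDeriv p) :=
  continuous_finsetSum _ fun j _ => ((continuous_apply j).comp continuous_snd).mul
    ((continuous_eval (grad p j)).comp continuous_fst)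

lemma continuous_dirDeriv_sq_div (F : ι → MvPolynomial σ ℝ) (hs : 0 < s) (hδ : 0 < δ) :
    Continuous fun z : (σ → ℝ) × (σ → ℝ) => (∑ i, dirDeriv (F i) z ^ 2) /
      ((eval z.1 (normSq F) + s ^ 2) * (∑ i, dirDeriv (F i) z ^ 2 + δ ^ 2)) := by
  have hN : Continuous fun z : (σ → ℝ) × (σ → ℝ) => eval z.1 (normSq F) :=
    (continuous_eval _).comp continuous_fst
  have hD (i : ι) : Continuous (dirDeriv (F i)) := continuous_dirDeriv (F i)
  refine .div (by fun_prop) (by fun_prop) fun z => ?_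
  have := eval_normSq_nonneg F z.1
  positivity

lemma integrable_eval_mul_dirDeriv_sq_div (F : ι → MvPolynomial σ ℝ) (W : MvPolynomial σ ℝ)
    (hs : 0 < s) (hδ : 0 < δ) :
    Integrable (fun z : (σ → ℝ) × (σ → ℝ) => eval z.1 W * ((∑ i, dirDeriv (F i) z ^ 2) /
      ((eval z.1 (normSq F) + s ^ 2) * (∑ i, dirDeriv (F i) z ^ 2 + δ ^ 2))))
      ((gaussianPi σ).prod (gaussianPi σ)) :=
  ((integrable_eval W).comp_fst _).mul_bdd
    (continuous_dirDeriv_sq_div F hs hδ).aestronglyMeasurable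
    (.of_forall fun z => abs_div_mul_le (by positivity) (eval_normSq_nonneg F z.1) hs hδ)

lemma integral_eval_mul_dirDeriv_sq_div_le (hF : ∀ i, (F i).totalDegree ≤ k)
    (hW : W.totalDegree ≤ l) (hW0 : ∀ x, 0 ≤ eval x W) (hs : 0 < s) (hδ : 0 < δ) :
    ∫ z : (σ → ℝ) × (σ → ℝ), eval z.1 W * ((∑ i, dirDeriv (F i) z ^ 2) /
        ((eval z.1 (normSq F) + s ^ 2) * (∑ i, dirDeriv (F i) z ^ 2 + δ ^ 2)))
        ∂(gaussianPi σ).prod (gaussianPi σ) ≤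
      (2 * l + 1) * (holderConst 4 ^ 2 * (2 ^ (6 * k + 1) / (s * δ))) * expect W := by
  have hWint : Integrable (fun z : (σ → ℝ) × (σ → ℝ) => eval z.1 W)
      ((gaussianPi σ).prod (gaussianPi σ)) := (integrable_eval W).comp_fst _
  refine (integral_le_integral_of_forall_rot (integrable_eval_mul_dirDeriv_sq_div F W hs hδ)
    (hWint.const_mul ((2 * l + 1) * (holderConst 4 ^ 2 * (2 ^ (6 * k + 1) / (s * δ)))))
    fun z => ?_).trans_eq ?_
  · have hrot : Continuous fun t => rot t z := by
      simp only [ContinuousLinearMap.rotation_apply]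
      fun_prop
    have hslab := integral_sum_deriv_sq_div_le (fun i => isTrigPoly_eval_rot (hF i) z) hs hδ
    simp only [deriv_eval_rot, ← eval_normSq] at hslab
    have hw0 : 0 ≤ ∫ t, eval (rot t z).1 W ∂angleMeasure := integral_nonneg fun t => hW0 _
    rw [integral_const_mul]
    refine ((isTrigPoly_eval_rot hW z).integral_mul_le (fun t => hW0 _)
      ((continuous_dirDeriv_sq_div F hs hδ).comp hrot) fun t => ?_).trans ?_
    · have := eval_normSq_nonneg F (rot t z).1
      simp only [Function.comp_apply]
      positivity
    · rw [mul_right_comm (2 * (l : ℝ) + 1)]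
      gcongr
      exact hslab
  · rw [integral_const_mul, integral_fun_fst (fun x => eval x W), probReal_univ, one_smul,
      expect_apply]

/-- The constant in the bound for the part of a soft small-ball probability where the Jacobian is
large, for families of degree at most `k` and weights of degree at most `l`. -/
noncomputable def slabConst (k l : ℕ) : ℝ := holderConst 4 ^ 4 * 2 ^ (6 * k + 1) * (2 * l + 1)

lemma slabConst_pos (k l : ℕ) : 0 < slabConst k l :=
  mul_pos (mul_pos (pow_pos (holderConst_pos 4) 4) (by positivity)) (by positivity)

lemma integral_eval_mul_jacobian_div_le (hF : ∀ i, (F i).totalDegree ≤ k) (hW : W.totalDegree ≤ l)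
    (hW0 : ∀ x, 0 ≤ eval x W) (hs : 0 < s) (hδ : 0 < δ) :
    ∫ x, eval x W * (eval x (normSq (jacobian F)) /
        ((eval x (normSq F) + s ^ 2) * (eval x (normSq (jacobian F)) + δ ^ 2))) ∂gaussianPi σ ≤
      slabConst k l / (s * δ) * expect W := by
  have hint := integrable_eval_mul_dirDeriv_sq_div F W hs hδ
  have hW' : Integrable (fun x => eval x W * (eval x (normSq (jacobian F)) /
        ((eval x (normSq F) + s ^ 2) * (eval x (normSq (jacobian F)) + δ ^ 2))))
      (gaussianPi σ) := by
    refine integrable_eval_mul_of_abs_le W (.div ?_ ?_ fun x => ?_) fun x =>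
      abs_div_mul_le (eval_normSq_nonneg _ x) (eval_normSq_nonneg F x) hs hδ
    · exact continuous_eval _
    · exact ((continuous_eval _).add_const _).mul ((continuous_eval _).add_const _)
    · have := eval_normSq_nonneg F x
      have := eval_normSq_nonneg (jacobian F) x
      positivity
  calc _ ≤ ∫ x, holderConst 4 ^ 2 * ∫ y, eval x W * ((∑ i, dirDeriv (F i) (x, y) ^ 2) /
        ((eval x (normSq F) + s ^ 2) * (∑ i, dirDeriv (F i) (x, y) ^ 2 + δ ^ 2))) ∂gaussianPi σ
          ∂gaussianPi σ := by
        refine integral_mono hW' (hint.integral_prod_left.const_mul _) fun x => ?_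
        simp only [integral_const_mul]
        rw [mul_left_comm]
        exact mul_le_mul_of_nonneg_left (eval_normSq_jacobian_div_le F x hs hδ) (hW0 x)
    _ ≤ holderConst 4 ^ 2 *
        ((2 * l + 1) * (holderConst 4 ^ 2 * (2 ^ (6 * k + 1) / (s * δ))) * expect W) := by
        rw [integral_const_mul, ← integral_prod _ hint]
        gcongr
        exact integral_eval_mul_dirDeriv_sq_div_le hF hW hW0 hs hδ
    _ = slabConst k l / (s * δ) * expect W := by rw [slabConst]; ring

end Slab

section SmallBall

open MvPolynomial

variable {σ ι : Type*} [Fintype ι] {k l : ℕ} {s δ : ℝ} {F : ι → MvPolynomial σ ℝ}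
  {W : MvPolynomial σ ℝ}

lemma eval_mul_normSq_nonneg (hW0 : ∀ x, 0 ≤ eval x W) (F : ι → MvPolynomial σ ℝ) (x : σ → ℝ) :
    0 ≤ eval x (W * normSq F) := by
  rw [map_mul]
  exact mul_nonneg (hW0 x) (eval_normSq_nonneg F x)

lemma div_add_sq_le_one (F : ι → MvPolynomial σ ℝ) (s : ℝ) (x : σ → ℝ) :
    s ^ 2 / (eval x (normSq F) + s ^ 2) ≤ 1 :=
  div_le_one_of_le₀ (le_add_of_nonneg_left (eval_normSq_nonneg F x))
    (add_nonneg (eval_normSq_nonneg F x) (sq_nonneg s))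

variable [Fintype σ]

/-- The `L²` norm of a family of polynomials with respect to the standard Gaussian measure. -/
noncomputable def l2Norm (F : ι → MvPolynomial σ ℝ) : ℝ := √(expect (normSq F))

lemma l2Norm_nonneg (F : ι → MvPolynomial σ ℝ) : 0 ≤ l2Norm F := Real.sqrt_nonneg _

lemma l2Norm_sq (F : ι → MvPolynomial σ ℝ) : l2Norm F ^ 2 = expect (normSq F) :=
  Real.sq_sqrt (expect_nonneg (eval_normSq_nonneg F))

lemma l2Norm_jacobian_le (hF : ∀ i, (F i).totalDegree ≤ k) :
    l2Norm (jacobian F) ≤ k * l2Norm F :=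
  Real.sqrt_le_iff.2 ⟨mul_nonneg k.cast_nonneg (l2Norm_nonneg F), by
    rw [mul_pow, l2Norm_sq]
    exact expect_normSq_jacobian_le hF⟩

lemma l2Norm_pos_of_jacobian (hF : ∀ i, (F i).totalDegree ≤ k) (h : 0 < l2Norm (jacobian F)) :
    0 < l2Norm F :=
  pos_of_mul_pos_right (h.trans_le (l2Norm_jacobian_le hF)) k.cast_nonneg

/-- The expectation of the weight `W` on the event that the family `F` has norm at most `s`, with
the indicator of this event replaced by the comparable function `s ^ 2 / (|F| ^ 2 + s ^ 2)`. -/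
noncomputable def smallBall (F : ι → MvPolynomial σ ℝ) (W : MvPolynomial σ ℝ) (s : ℝ) : ℝ :=
  ∫ x, eval x W * (s ^ 2 / (eval x (normSq F) + s ^ 2)) ∂gaussianPi σ

lemma integrable_smallBall (F : ι → MvPolynomial σ ℝ) (W : MvPolynomial σ ℝ) (s : ℝ) :
    Integrable (fun x => eval x W * (s ^ 2 / (eval x (normSq F) + s ^ 2))) (gaussianPi σ) := by
  refine (integrable_eval W).mul_bdd (c := 1) ?_ (.of_forall fun x => ?_)
  · exact (measurable_const.div ((continuous_eval _).measurable.add_const _)).aestronglyMeasurable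
  · have := eval_normSq_nonneg F x
    rw [Real.norm_of_nonneg (by positivity)]
    exact div_add_sq_le_one F s x

lemma smallBall_nonneg (F : ι → MvPolynomial σ ℝ) (hW0 : ∀ x, 0 ≤ eval x W) (s : ℝ) :
    0 ≤ smallBall F W s :=
  integral_nonneg fun x => mul_nonneg (hW0 x)
    (div_nonneg (sq_nonneg s) (add_nonneg (eval_normSq_nonneg F x) (sq_nonneg s)))

lemma smallBall_le_expect (F : ι → MvPolynomial σ ℝ) (hW0 : ∀ x, 0 ≤ eval x W) (s : ℝ) :
    smallBall F W s ≤ expect W :=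
  integral_mono (integrable_smallBall F W s) (integrable_eval W) fun x =>
    mul_le_of_le_one_right (hW0 x) (div_add_sq_le_one F s x)

lemma smallBall_zero (F : ι → MvPolynomial σ ℝ) (W : MvPolynomial σ ℝ) : smallBall F W 0 = 0 := by
  simp [smallBall]

/-- The factor `|J| ^ 2 / (|J| ^ 2 + δ ^ 2)` is a soft indicator of the event that the Jacobian `J`
of `F` is large. -/
lemma integral_mul_jacobian_le (hF : ∀ i, (F i).totalDegree ≤ k) (hW : W.totalDegree ≤ l)
    (hW0 : ∀ x, 0 ≤ eval x W) (hs : 0 < s) (hδ : 0 < δ) :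
    ∫ x, eval x W * (s ^ 2 / (eval x (normSq F) + s ^ 2)) *
        (eval x (normSq (jacobian F)) / (eval x (normSq (jacobian F)) + δ ^ 2)) ∂gaussianPi σ ≤
      slabConst k l * (s / δ) * expect W :=
  calc _ = s ^ 2 * ∫ x, eval x W * (eval x (normSq (jacobian F)) /
        ((eval x (normSq F) + s ^ 2) * (eval x (normSq (jacobian F)) + δ ^ 2))) ∂gaussianPi σ := by
        rw [← integral_const_mul]
        refine integral_congr_ae (.of_forall fun x => ?_)
        have := eval_normSq_nonneg F x
        have := eval_normSq_nonneg (jacobian F) x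
        simp only
        field_simp
    _ ≤ s ^ 2 * (slabConst k l / (s * δ) * expect W) := by
        gcongr
        exact integral_eval_mul_jacobian_div_le hF hW hW0 hs hδ
    _ = _ := by field_simp

lemma smallBall_le_add_smallBall_jacobian (hF : ∀ i, (F i).totalDegree ≤ k)
    (hW : W.totalDegree ≤ l) (hW0 : ∀ x, 0 ≤ eval x W) (hs : 0 < s) (hδ : 0 < δ) :
    smallBall F W s ≤
      slabConst k l * (s / δ) * expect W + smallBall (jacobian F) W δ := by
  refine le_trans ?_ (add_le_add_left (integral_mul_jacobian_le hF hW hW0 hs hδ) _)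
  have hJ : Continuous fun x => eval x (normSq (jacobian F)) := continuous_eval _
  have hint : Integrable (fun x => eval x W * (s ^ 2 / (eval x (normSq F) + s ^ 2)) *
      (eval x (normSq (jacobian F)) / (eval x (normSq (jacobian F)) + δ ^ 2))) (gaussianPi σ) := by
    refine (integrable_smallBall F W s).mul_bdd (c := 1)
      (hJ.div (hJ.add_const _) fun x => ?_).aestronglyMeasurable (.of_forall fun x => ?_)
    · have := eval_normSq_nonneg (jacobian F) x
      positivity
    · have := eval_normSq_nonneg (jacobian F) x
      rw [Real.norm_of_nonneg (by positivity)]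
      exact div_le_one_of_le₀ (le_add_of_nonneg_right (sq_nonneg δ)) (by positivity)
  rw [smallBall, smallBall, ← integral_add hint (integrable_smallBall _ W δ)]
  refine integral_mono (integrable_smallBall F W s)
    (hint.add (integrable_smallBall _ W δ)) fun x => ?_
  have hW0 := hW0 x
  have hJ0 := eval_normSq_nonneg (jacobian F) x
  have hle := div_add_sq_le_one F s x
  have hsplit : eval x (normSq (jacobian F)) / (eval x (normSq (jacobian F)) + δ ^ 2) +
      δ ^ 2 / (eval x (normSq (jacobian F)) + δ ^ 2) = 1 := by field_simp
  calc eval x W * (s ^ 2 / (eval x (normSq F) + s ^ 2))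
      = eval x W * (s ^ 2 / (eval x (normSq F) + s ^ 2)) *
          (eval x (normSq (jacobian F)) / (eval x (normSq (jacobian F)) + δ ^ 2)) +
        eval x W * (s ^ 2 / (eval x (normSq F) + s ^ 2) *
          (δ ^ 2 / (eval x (normSq (jacobian F)) + δ ^ 2))) := by
        linear_combination -(eval x W * (s ^ 2 / (eval x (normSq F) + s ^ 2))) * hsplit
    _ ≤ _ := by
        gcongr
        exact mul_le_of_le_one_left (by positivity) hle

/-- Small-ball estimate with weights of bounded degree for families of polynomials of degree at
most `k`: the family `F` has norm at most `u ^ k * ‖F‖₂` with probability `O(u)`. -/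
def SoftSmallBall (k : ℕ) : Prop :=
  ∀ l : ℕ, ∃ C > 0, ∀ (σ ι : Type) [Fintype σ] [Fintype ι] (F : ι → MvPolynomial σ ℝ)
    (W : MvPolynomial σ ℝ), (∀ i, (F i).totalDegree ≤ k) → W.totalDegree ≤ l →
    (∀ x, 0 ≤ eval x W) → ∀ u > 0, smallBall F W (l2Norm F * u ^ k) ≤ C * u * expect W

/-- A weaker form of `SoftSmallBall k`, useful only when the Jacobian of `F` is not much smaller
than `F` itself. -/
def GradientSmallBall (k : ℕ) : Prop :=
  ∀ l : ℕ, ∃ C > 0, ∀ (σ ι : Type) [Fintype σ] [Fintype ι] (F : ι → MvPolynomial σ ℝ)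
    (W : MvPolynomial σ ℝ), (∀ i, (F i).totalDegree ≤ k) → W.totalDegree ≤ l →
    (∀ x, 0 ≤ eval x W) → ∀ u > 0,
    l2Norm (jacobian F) * smallBall F W (l2Norm F * u ^ k) ≤ C * l2Norm F * u * expect W

lemma SoftSmallBall.gradientSmallBall_succ (h : SoftSmallBall k) : GradientSmallBall (k + 1) := by
  intro l
  obtain ⟨C, hC, hball⟩ := h l
  refine ⟨slabConst (k + 1) l + C * (k + 1 : ℕ), by have := slabConst_pos (k + 1) l; positivity,
    fun σ ι _ _ F W hF hW hW0 u hu => ?_⟩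
  have hT := l2Norm_nonneg F
  have hEW := expect_nonneg hW0
  rcases (l2Norm_nonneg (jacobian F)).eq_or_lt with hτ | hτ
  · rw [← hτ, zero_mul]
    have := slabConst_pos (k + 1) l
    positivity
  have hT' := l2Norm_pos_of_jacobian hF hτ
  calc l2Norm (jacobian F) * smallBall F W (l2Norm F * u ^ (k + 1))
      ≤ l2Norm (jacobian F) * (slabConst (k + 1) l *
          (l2Norm F * u ^ (k + 1) / (l2Norm (jacobian F) * u ^ k)) * expect W +
          C * u * expect W) := by
        grw [smallBall_le_add_smallBall_jacobian hF hW hW0 (by positivity)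
          (by positivity : 0 < l2Norm (jacobian F) * u ^ k),
          hball _ _ (jacobian F) W (totalDegree_jacobian_le hF) hW hW0 u hu]
    _ = slabConst (k + 1) l * l2Norm F * u * expect W +
        C * l2Norm (jacobian F) * u * expect W := by field_simp; ring
    _ ≤ slabConst (k + 1) l * l2Norm F * u * expect W +
        C * ((k + 1 : ℕ) * l2Norm F) * u * expect W := by grw [l2Norm_jacobian_le hF]
    _ = _ := by ring

lemma gradientSmallBall_one : GradientSmallBall 1 := by
  intro l
  have := slabConst_pos 1 l
  refine ⟨2 * slabConst 1 l, by positivity, fun σ ι _ _ F W hF hW hW0 u hu => ?_⟩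
  have hT := l2Norm_nonneg F
  have hEW := expect_nonneg hW0
  rcases (l2Norm_nonneg (jacobian F)).eq_or_lt with hτ | hτ
  · rw [← hτ, zero_mul]
    positivity
  have hT' := l2Norm_pos_of_jacobian hF hτ
  have hconst (x : σ → ℝ) : eval x (normSq (jacobian F)) = l2Norm (jacobian F) ^ 2 := by
    rw [l2Norm_sq]
    exact eval_eq_expect (Nat.le_zero.1 (totalDegree_normSq_le (totalDegree_jacobian_le hF))) x
  have h := integral_mul_jacobian_le hF hW hW0 (by positivity : 0 < l2Norm F * u) hτ
  simp only [hconst] at h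
  rw [integral_mul_const] at h
  have hhalf : l2Norm (jacobian F) ^ 2 / (l2Norm (jacobian F) ^ 2 + l2Norm (jacobian F) ^ 2) =
      1 / 2 := by field_simp; norm_num
  rw [hhalf] at h
  calc l2Norm (jacobian F) * smallBall F W (l2Norm F * u ^ 1)
      = 2 * l2Norm (jacobian F) * (smallBall F W (l2Norm F * u) * (1 / 2)) := by rw [pow_one]; ring
    _ ≤ 2 * l2Norm (jacobian F) *
        (slabConst 1 l * (l2Norm F * u / l2Norm (jacobian F)) * expect W) := by
        gcongr ?_ * ?_
        exact h
    _ = _ := by field_simp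

/-- The centering of a family of polynomials. -/
noncomputable def centered (F : ι → MvPolynomial σ ℝ) : ι → MvPolynomial σ ℝ :=
  fun i => F i - C (expect (F i))

lemma l2Norm_sq_le_centered (F : ι → MvPolynomial σ ℝ) (x : σ → ℝ) :
    l2Norm F ^ 2 ≤ l2Norm (centered F) ^ 2 + 2 * eval x (normSq F) +
      2 * eval x (normSq (centered F)) := by
  have hmean : l2Norm F ^ 2 = l2Norm (centered F) ^ 2 + ∑ i, expect (F i) ^ 2 := by
    simp only [l2Norm_sq, expect_normSq, centered, expect_sub_expect_sq, Finset.sum_sub_distrib,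
      sub_add_cancel]
  rw [hmean, add_assoc, eval_normSq, eval_normSq, Finset.mul_sum, Finset.mul_sum,
    ← Finset.sum_add_distrib]
  gcongr with i
  simp only [centered, map_sub, eval_C]
  linarith [sq_nonneg (2 * eval x (F i) - expect (F i))]

lemma l2Norm_sq_mul_smallBall_le (F : ι → MvPolynomial σ ℝ) (hW0 : ∀ x, 0 ≤ eval x W)
    (hs : 0 < s) :
    l2Norm F ^ 2 * smallBall F W s ≤ l2Norm (centered F) ^ 2 * smallBall F W s +
      2 * s ^ 2 * expect W + 2 * smallBall F (W * normSq (centered F)) s := by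
  have hv := (integrable_smallBall F W s).const_mul (l2Norm (centered F) ^ 2)
  have hW := (integrable_eval W).const_mul (2 * s ^ 2)
  have hWv := (integrable_smallBall F (W * normSq (centered F)) s).const_mul 2
  simp only [smallBall, expect_apply]
  rw [← integral_const_mul, ← integral_const_mul, ← integral_const_mul, ← integral_const_mul,
    ← integral_add hv hW, ← integral_add (hv.fun_add hW) hWv]
  refine integral_mono ((integrable_smallBall F W s).const_mul _) ((hv.fun_add hW).fun_add hWv)
    fun x => ?_
  have hW0 := hW0 x
  have hN0 := eval_normSq_nonneg F x
  have hN : eval x (normSq F) * (s ^ 2 / (eval x (normSq F) + s ^ 2)) ≤ s ^ 2 := by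
    rw [mul_div_assoc', div_le_iff₀ (by positivity)]
    nlinarith [sq_nonneg (s ^ 2)]
  calc l2Norm F ^ 2 * (eval x W * (s ^ 2 / (eval x (normSq F) + s ^ 2)))
      ≤ (l2Norm (centered F) ^ 2 + 2 * eval x (normSq F) + 2 * eval x (normSq (centered F))) *
          (eval x W * (s ^ 2 / (eval x (normSq F) + s ^ 2))) := by
        gcongr
        exact l2Norm_sq_le_centered F x
    _ = l2Norm (centered F) ^ 2 * (eval x W * (s ^ 2 / (eval x (normSq F) + s ^ 2))) +
        2 * (eval x (normSq F) * (s ^ 2 / (eval x (normSq F) + s ^ 2))) * eval x W +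
        2 * (eval x (W * normSq (centered F)) * (s ^ 2 / (eval x (normSq F) + s ^ 2))) := by
        rw [map_mul]
        ring
    _ ≤ _ := by grw [hN]

lemma l2Norm_centered_sq_le (F : ι → MvPolynomial σ ℝ) :
    l2Norm (centered F) ^ 2 ≤ 2 * l2Norm (jacobian F) ^ 2 := by
  rw [l2Norm_sq, l2Norm_sq]
  exact expect_normSq_sub_expect_le F

lemma totalDegree_mul_normSq_centered_le (hF : ∀ i, (F i).totalDegree ≤ k)
    (hW : W.totalDegree ≤ l) : (W * normSq (centered F)).totalDegree ≤ l + 2 * k :=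
  (totalDegree_mul _ _).trans <| add_le_add hW <| totalDegree_normSq_le fun i =>
    (totalDegree_sub_C_le _ _).trans (hF i)

lemma expect_mul_normSq_centered_le (hF : ∀ i, (F i).totalDegree ≤ k) (hW : W.totalDegree ≤ l)
    (hW0 : ∀ x, 0 ≤ eval x W) :
    expect (W * normSq (centered F)) ≤
      2 * holderConst (l + 2 * k) * expect W * l2Norm (jacobian F) ^ 2 := by
  have hdeg : (normSq (centered F)).totalDegree ≤ 2 * k :=
    totalDegree_normSq_le fun i => (totalDegree_sub_C_le _ _).trans (hF i)
  have := holderConst_pos (l + 2 * k)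
  have := expect_nonneg hW0
  calc _ ≤ holderConst (l + 2 * k) * (expect W * l2Norm (centered F) ^ 2) := by
        rw [l2Norm_sq]
        exact expect_mul_le (by omega) (by omega) hW0 (eval_normSq_nonneg _)
    _ ≤ holderConst (l + 2 * k) * (expect W * (2 * l2Norm (jacobian F) ^ 2)) := by
        grw [l2Norm_centered_sq_le]
    _ = _ := by ring

lemma smallBall_mul_normSq_centered_le {a : ℝ} (hF : ∀ i, (F i).totalDegree ≤ k)
    (hW : W.totalDegree ≤ l) (hW0 : ∀ x, 0 ≤ eval x W) (ha : 0 ≤ a)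
    (h : l2Norm (jacobian F) * smallBall F (W * normSq (centered F)) s ≤
      a * expect (W * normSq (centered F))) :
    smallBall F (W * normSq (centered F)) s ≤
      2 * holderConst (l + 2 * k) * a * l2Norm (jacobian F) * expect W := by
  have hexpect := expect_mul_normSq_centered_le hF hW hW0
  have hle := smallBall_le_expect F (W := W * normSq (centered F))
    (eval_mul_normSq_nonneg hW0 _) s
  rcases (l2Norm_nonneg (jacobian F)).eq_or_lt with hτ | hτ
  · rw [← hτ] at hexpect ⊢
    linarith
  · refine le_of_mul_le_mul_left (h.trans ?_) hτ
    grw [hexpect]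
    exact le_of_eq (by ring)

lemma smallBall_le_of_lt_one {A u : ℝ} (hW0 : ∀ x, 0 ≤ eval x W) (hA : 1 ≤ A) (hu : 0 < u)
    (h : 0 < l2Norm F → u < 1 → smallBall F W (l2Norm F * u ^ k) ≤ A * u * expect W) :
    smallBall F W (l2Norm F * u ^ k) ≤ A * u * expect W := by
  have hEW := expect_nonneg hW0
  rcases (l2Norm_nonneg F).eq_or_lt with hT | hT
  · rw [← hT, zero_mul, smallBall_zero]
    positivity
  rcases lt_or_ge u 1 with hu1 | hu1
  · exact h hT hu1
  · exact (smallBall_le_expect F hW0 _).trans (le_mul_of_one_le_left hEW (by nlinarith))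

/-- If the Jacobian of `F` is much smaller than `F`, then by the Poincaré inequality `F` is close to
a constant family, and `|F|` is small only where the centering of `F` is large. -/
lemma GradientSmallBall.softSmallBall (h : GradientSmallBall (k + 1)) : SoftSmallBall (k + 1) := by
  intro l
  obtain ⟨A, hA, hA_le⟩ := h l
  obtain ⟨B, hB, hB_le⟩ := h (l + 2 * (k + 1))
  have hH := holderConst_pos (l + 2 * (k + 1))
  set H := holderConst (l + 2 * (k + 1))
  refine ⟨2 * (k + 1 : ℕ) * A + 2 + 4 * H * B * (k + 1 : ℕ), by positivity,
    fun σ ι _ _ F W hF hW hW0 u hu => ?_⟩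
  have hEW := expect_nonneg hW0
  refine smallBall_le_of_lt_one hW0 ?_ hu fun hT hu1 => ?_
  · linarith [(by positivity : 0 ≤ 2 * (k + 1 : ℕ) * A + 4 * H * B * (k + 1 : ℕ))]
  have hτ0 := l2Norm_nonneg (jacobian F)
  have hτ := l2Norm_jacobian_le hF
  have hsmall := hA_le σ ι F W hF hW hW0 u hu
  have hweighted := smallBall_mul_normSq_centered_le hF hW hW0 (by positivity) <|
    hB_le σ ι F (W * normSq (centered F)) hF (totalDegree_mul_normSq_centered_le hF hW)
      (eval_mul_normSq_nonneg hW0 _) u hu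
  have hmain := l2Norm_sq_mul_smallBall_le F hW0 (by positivity : 0 < l2Norm F * u ^ (k + 1))
  have hpow : (u ^ (k + 1)) ^ 2 ≤ u := by
    rw [← pow_mul]
    exact pow_le_of_le_one hu.le hu1.le (by omega)
  have hSB := smallBall_nonneg F hW0 (l2Norm F * u ^ (k + 1))
  set S := smallBall F W (l2Norm F * u ^ (k + 1))
  set T := l2Norm F
  set τ := l2Norm (jacobian F)
  refine le_of_mul_le_mul_left ?_ (by positivity : 0 < T ^ 2)
  calc T ^ 2 * S ≤ 2 * τ ^ 2 * S + 2 * (T ^ 2 * u) * expect W +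
        2 * (2 * H * (B * T * u) * τ * expect W) := by
        grw [hmain, l2Norm_centered_sq_le, mul_pow, hpow, hweighted]
    _ = 2 * τ * (τ * S) + 2 * (T ^ 2 * u) * expect W +
        2 * (2 * H * (B * T * u) * τ * expect W) := by ring
    _ ≤ 2 * ((k + 1 : ℕ) * T) * (A * T * u * expect W) + 2 * (T ^ 2 * u) * expect W +
        2 * (2 * H * (B * T * u) * ((k + 1 : ℕ) * T) * expect W) := by grw [hsmall, hτ]
    _ = _ := by ring

lemma softSmallBall_succ (k : ℕ) : SoftSmallBall (k + 1) := by
  induction k with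
  | zero => exact gradientSmallBall_one.softSmallBall
  | succ k ih => exact ih.gradientSmallBall_succ.softSmallBall

end SmallBall

section LargeGradient

open MvPolynomial

/-- The expectation of `a * ξ ^ 2 / (a * ξ ^ 2 + b)` for a standard Gaussian variable `ξ`. -/
noncomputable def gaussRatio (a b : ℝ) : ℝ := ∫ ξ, a * ξ ^ 2 / (a * ξ ^ 2 + b) ∂gaussianReal 0 1

lemma integrable_gaussRatio {a b : ℝ} (ha : 0 ≤ a) (hb : 0 ≤ b) :
    Integrable (fun ξ => a * ξ ^ 2 / (a * ξ ^ 2 + b)) (gaussianReal 0 1) := by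
  refine .of_bound (Measurable.aestronglyMeasurable (by fun_prop)) 1 (.of_forall fun ξ => ?_)
  rw [Real.norm_of_nonneg (by positivity)]
  exact div_le_one_of_le₀ (le_add_of_nonneg_right hb) (by positivity)

lemma gaussRatio_pos {a b : ℝ} (ha : 0 < a) (hb : 0 ≤ b) : 0 < gaussRatio a b := by
  have hnonneg (ξ : ℝ) : 0 ≤ a * ξ ^ 2 / (a * ξ ^ 2 + b) := by positivity
  refine (integral_pos_iff_support_of_nonneg hnonneg (integrable_gaussRatio ha.le hb)).2 ?_
  have hsupport : ({0}ᶜ : Set ℝ) ⊆ Function.support fun ξ => a * ξ ^ 2 / (a * ξ ^ 2 + b) :=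
    fun ξ hξ => by
      have : 0 < ξ ^ 2 := pow_pos (abs_pos.2 hξ) 2 |>.trans_eq (sq_abs ξ)
      exact (by positivity : 0 < a * ξ ^ 2 / (a * ξ ^ 2 + b)).ne'
  have := nullSingletonClass_gaussianReal (μ := 0) one_ne_zero
  refine lt_of_lt_of_le ?_ (measure_mono hsupport)
  rw [prob_compl_eq_one_sub (measurableSet_singleton 0), measure_singleton, tsub_zero]
  exact one_pos

lemma gaussRatio_mul {c : ℝ} (hc : c ≠ 0) (a b : ℝ) :
    gaussRatio (c * a) (c * b) = gaussRatio a b := by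
  refine integral_congr_ae (.of_forall fun ξ => ?_)
  simp only [mul_assoc, ← mul_add, mul_div_mul_left _ _ hc]

lemma abs_gaussRatio_sub_le {a δ : ℝ} (ha : 0 ≤ a) (hδ : 0 < δ) :
    |gaussRatio 1 1 - gaussRatio a (a + δ ^ 2)| ≤ δ ^ 2 / (a + δ ^ 2) := by
  rw [gaussRatio, gaussRatio, ← integral_sub (integrable_gaussRatio zero_le_one zero_le_one)
    (integrable_gaussRatio ha (by positivity)), ← Real.norm_eq_abs]
  refine (norm_integral_le_of_norm_le_const (C := δ ^ 2 / (a + δ ^ 2))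
    (.of_forall fun ξ => ?_)).trans_eq (by simp)
  have hdiff : 1 * ξ ^ 2 / (1 * ξ ^ 2 + 1) - a * ξ ^ 2 / (a * ξ ^ 2 + (a + δ ^ 2)) =
      ξ ^ 2 / (ξ ^ 2 + 1) * (δ ^ 2 / (a * ξ ^ 2 + (a + δ ^ 2))) := by
    field_simp
    ring
  rw [hdiff, Real.norm_of_nonneg (by positivity)]
  calc ξ ^ 2 / (ξ ^ 2 + 1) * (δ ^ 2 / (a * ξ ^ 2 + (a + δ ^ 2)))
      ≤ 1 * (δ ^ 2 / (a + δ ^ 2)) := by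
        gcongr ?_ * (_ / ?_)
        · exact div_le_one_of_le₀ (by linarith) (by positivity)
        · exact le_add_of_nonneg_left (by positivity)
    _ = _ := one_mul _

lemma map_sqrt_mul_gaussianReal {a : ℝ} (ha : 0 ≤ a) :
    (gaussianReal 0 1).map (√a * ·) = gaussianReal 0 a.toNNReal := by
  rw [gaussianReal_map_const_mul, mul_zero, mul_one]
  congr 1
  ext
  simp [Real.sq_sqrt ha, ha]

variable {σ : Type*} [Fintype σ] {d : ℕ} {g : MvPolynomial σ ℝ} {φ : ℝ → ℝ} {ε δ : ℝ}

lemma integral_dirDeriv_sq_div (g : MvPolynomial σ ℝ) (x : σ → ℝ) (b : ℝ) :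
    ∫ y, dirDeriv g (x, y) ^ 2 / (dirDeriv g (x, y) ^ 2 + b) ∂gaussianPi σ =
      gaussRatio (eval x (normSq (grad g))) b := by
  have ha := eval_normSq_nonneg (grad g) x
  have hmeas : Measurable fun r : ℝ => r ^ 2 / (r ^ 2 + b) := by fun_prop
  have hlaw : (gaussianPi σ).map (fun y => dirDeriv g (x, y)) =
      (gaussianReal 0 1).map (√(eval x (normSq (grad g))) * ·) := by
    rw [map_sqrt_mul_gaussianReal ha, eval_normSq]
    exact map_sum_mul_gaussianPi fun j => eval x (grad g j)
  have hD : Measurable fun y => dirDeriv g (x, y) :=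
    ((continuous_dirDeriv g).comp (.prodMk_right x)).measurable
  calc _ = ∫ r, r ^ 2 / (r ^ 2 + b) ∂(gaussianPi σ).map (fun y => dirDeriv g (x, y)) :=
        (integral_map hD.aemeasurable hmeas.aestronglyMeasurable).symm
    _ = _ := by
        rw [hlaw, integral_map (by fun_prop) hmeas.aestronglyMeasurable]
        simp only [mul_pow, Real.sq_sqrt ha, gaussRatio]

lemma integrable_deriv_comp_mul (hφ : ContDiff ℝ 1 φ) (hφ' : ∀ r, |deriv φ r| ≤ 1)
    (hδ : 0 < δ) :
    Integrable (fun z : (σ → ℝ) × (σ → ℝ) => deriv φ (eval z.1 g) *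
      (dirDeriv g z ^ 2 / (dirDeriv g z ^ 2 + (eval z.1 (normSq (grad g)) + δ ^ 2))))
      ((gaussianPi σ).prod (gaussianPi σ)) := by
  have hN (x : σ → ℝ) := eval_normSq_nonneg (grad g) x
  have hD := continuous_dirDeriv g
  have heval (p : MvPolynomial σ ℝ) : Continuous fun z : (σ → ℝ) × (σ → ℝ) => eval z.1 p :=
    (continuous_eval p).comp continuous_fst
  have hcont : Continuous fun z : (σ → ℝ) × (σ → ℝ) => deriv φ (eval z.1 g) *
      (dirDeriv g z ^ 2 / (dirDeriv g z ^ 2 + (eval z.1 (normSq (grad g)) + δ ^ 2))) := by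
    refine ((hφ.continuous_deriv le_rfl).comp (heval g)).mul
      ((hD.pow 2).div ((hD.pow 2).add ((heval _).add_const _)) fun z => ?_)
    have := hN z.1
    positivity
  refine .of_bound hcont.aestronglyMeasurable 1 (.of_forall fun z => ?_)
  have := hN z.1
  rw [norm_mul, Real.norm_of_nonneg (by positivity : 0 ≤ dirDeriv g z ^ 2 / _)]
  exact mul_le_one₀ (hφ' _) (by positivity)
    (div_le_one_of_le₀ (le_add_of_nonneg_right (by positivity)) (by positivity))

lemma abs_integral_deriv_comp_mul_dirDeriv_le (hg : g.totalDegree ≤ d) (hφ : ContDiff ℝ 1 φ)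
    (hφε : ∀ r, |φ r| ≤ ε) (hφ' : ∀ r, |deriv φ r| ≤ 1) (hδ : 0 < δ) :
    |∫ z : (σ → ℝ) × (σ → ℝ), deriv φ (eval z.1 g) *
      (dirDeriv g z ^ 2 / (dirDeriv g z ^ 2 + (eval z.1 (normSq (grad g)) + δ ^ 2)))
      ∂(gaussianPi σ).prod (gaussianPi σ)| ≤ 2 ^ (10 * d) * ε / δ := by
  rw [← integral_integral_rot (integrable_deriv_comp_mul hφ hφ' hδ), ← Real.norm_eq_abs]
  refine (norm_integral_le_of_norm_le_const (C := 2 ^ (10 * d) * ε / δ)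
    (.of_forall fun z => ?_)).trans_eq (by simp)
  have hdeg : (normSq (grad g)).totalDegree ≤ 2 * d :=
    (totalDegree_normSq_le (totalDegree_grad_le hg)).trans (by omega)
  have hcircle := (isTrigPoly_eval_rot hg z).abs_integral_deriv_comp_le
    (isTrigPoly_eval_rot hdeg z) (fun t => eval_normSq_nonneg _ _) hφ hφε hδ
  rw [show 6 * d + 2 * (2 * d) = 10 * d by ring] at hcircle
  simpa only [deriv_eval_rot, add_assoc, Real.norm_eq_abs] using hcircle

lemma abs_integral_deriv_comp_mul_gaussRatio_le (hg : g.totalDegree ≤ d) (hφ : ContDiff ℝ 1 φ)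
    (hφε : ∀ r, |φ r| ≤ ε) (hφ' : ∀ r, |deriv φ r| ≤ 1) (hδ : 0 < δ) :
    |∫ x, deriv φ (eval x g) * gaussRatio (eval x (normSq (grad g)))
      (eval x (normSq (grad g)) + δ ^ 2) ∂gaussianPi σ| ≤ 2 ^ (10 * d) * ε / δ := by
  refine le_of_eq_of_le ?_ (abs_integral_deriv_comp_mul_dirDeriv_le hg hφ hφε hφ' hδ)
  rw [integral_prod _ (integrable_deriv_comp_mul hφ hφ' hδ)]
  simp only [integral_const_mul, integral_dirDeriv_sq_div]

lemma integrable_deriv_comp_eval (g : MvPolynomial σ ℝ) (hφ : ContDiff ℝ 1 φ)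
    (hφ' : ∀ r, |deriv φ r| ≤ 1) :
    Integrable (fun x => deriv φ (eval x g)) (gaussianPi σ) :=
  .of_bound ((hφ.continuous_deriv le_rfl).comp (continuous_eval g)).aestronglyMeasurable 1
    (.of_forall fun _ => hφ' _)

lemma gaussRatio_mul_abs_integral_le (hg : g.totalDegree ≤ d) (hφ : ContDiff ℝ 1 φ)
    (hφε : ∀ r, |φ r| ≤ ε) (hφ' : ∀ r, |deriv φ r| ≤ 1) (hδ : 0 < δ) :
    gaussRatio 1 1 * |∫ x, deriv φ (eval x g) ∂gaussianPi σ| ≤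
      2 ^ (10 * d) * ε / δ + smallBall (grad g) 1 δ := by
  set ratio : (σ → ℝ) → ℝ := fun x =>
    gaussRatio (eval x (normSq (grad g))) (eval x (normSq (grad g)) + δ ^ 2)
  have hint := integrable_deriv_comp_eval g hφ hφ'
  have hmain : Integrable (fun x => deriv φ (eval x g) * ratio x) (gaussianPi σ) := by
    simpa only [integral_const_mul, integral_dirDeriv_sq_div] using
      (integrable_deriv_comp_mul (g := g) hφ hφ' hδ).integral_prod_left
  have herror : |∫ x, deriv φ (eval x g) * (gaussRatio 1 1 - ratio x) ∂gaussianPi σ| ≤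
      smallBall (grad g) 1 δ := by
    rw [← Real.norm_eq_abs]
    refine norm_integral_le_of_norm_le (integrable_smallBall (grad g) 1 δ)
      (.of_forall fun x => ?_)
    rw [norm_mul, map_one]
    exact mul_le_mul (hφ' _) (abs_gaussRatio_sub_le (eval_normSq_nonneg (grad g) x) hδ)
      (norm_nonneg _) zero_le_one
  calc gaussRatio 1 1 * |∫ x, deriv φ (eval x g) ∂gaussianPi σ|
      = |∫ x, deriv φ (eval x g) * gaussRatio 1 1 ∂gaussianPi σ| := by
        rw [integral_mul_const, abs_mul, mul_comm,
          abs_of_pos (gaussRatio_pos one_pos zero_le_one)]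
    _ = |(∫ x, deriv φ (eval x g) * ratio x ∂gaussianPi σ) +
          ∫ x, deriv φ (eval x g) * (gaussRatio 1 1 - ratio x) ∂gaussianPi σ| := by
        simp only [mul_sub]
        rw [integral_sub (hint.mul_const _) hmain, add_sub_cancel]
    _ ≤ _ := (abs_add_le _ _).trans
        (add_le_add (abs_integral_deriv_comp_mul_gaussRatio_le hg hφ hφε hφ' hδ) herror)

lemma gaussRatio_mul_abs_integral_le_of_totalDegree_le_one (hg : g.totalDegree ≤ 1)
    (hτ : 0 < l2Norm (grad g)) (hφ : ContDiff ℝ 1 φ) (hφε : ∀ r, |φ r| ≤ ε)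
    (hφ' : ∀ r, |deriv φ r| ≤ 1) :
    gaussRatio 1 2 * |∫ x, deriv φ (eval x g) ∂gaussianPi σ| ≤ 2 ^ 10 * ε / l2Norm (grad g) := by
  have hconst (x : σ → ℝ) : eval x (normSq (grad g)) = l2Norm (grad g) ^ 2 := by
    rw [l2Norm_sq]
    exact eval_eq_expect (Nat.le_zero.1 (totalDegree_normSq_le (totalDegree_grad_le hg))) x
  have h := abs_integral_deriv_comp_mul_gaussRatio_le hg hφ hφε hφ' hτ
  have hratio : gaussRatio (l2Norm (grad g) ^ 2) (l2Norm (grad g) ^ 2 + l2Norm (grad g) ^ 2) =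
      gaussRatio 1 2 := by
    rw [← gaussRatio_mul (pow_pos hτ 2).ne' 1 2, mul_one, mul_two]
  simp only [hconst, hratio, integral_mul_const] at h
  rwa [abs_mul, mul_comm, abs_of_pos (gaussRatio_pos one_pos zero_le_two)] at h

lemma exists_abs_integral_deriv_comp_le (hd : 1 ≤ d) :
    ∃ C > 0, ∀ (σ : Type) [Fintype σ] (g : MvPolynomial σ ℝ), g.totalDegree ≤ d →
      0 < l2Norm (grad g) → ∀ φ : ℝ → ℝ, ContDiff ℝ 1 φ → (∀ r, |deriv φ r| ≤ 1) →
      ∀ u > 0, (∀ r, |φ r| ≤ l2Norm (grad g) * u ^ d) →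
      |∫ x, deriv φ (eval x g) ∂gaussianPi σ| ≤ C * u := by
  obtain rfl | ⟨k, rfl⟩ : d = 1 ∨ ∃ k, d = k + 2 := by
    obtain _ | _ | k := d <;> simp_all
  · have hκ : 0 < gaussRatio 1 2 := gaussRatio_pos one_pos zero_le_two
    refine ⟨2 ^ 10 / gaussRatio 1 2, by positivity, fun σ _ g hg hτ φ hφ hφ' u _ hφε => ?_⟩
    have h := gaussRatio_mul_abs_integral_le_of_totalDegree_le_one hg hτ hφ hφε hφ'
    rw [pow_one, mul_left_comm, mul_div_cancel_left₀ _ hτ.ne', ← le_div_iff₀' hκ] at h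
    exact h.trans_eq (by ring)
  · have hκ : 0 < gaussRatio 1 1 := gaussRatio_pos one_pos zero_le_one
    obtain ⟨C, hC, hball⟩ := softSmallBall_succ k 0
    refine ⟨(2 ^ (10 * (k + 2)) + C) / gaussRatio 1 1, by positivity,
      fun σ _ g hg hτ φ hφ hφ' u hu hφε => ?_⟩
    have h := gaussRatio_mul_abs_integral_le hg hφ hφε hφ'
      (δ := l2Norm (grad g) * u ^ (k + 1)) (by positivity)
    have hsmall := hball σ σ (grad g) 1 (totalDegree_grad_le hg) (by simp) (by simp) u hu
    rw [← C_1, expect_C, C_1, mul_one] at hsmall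
    have hscale : 2 ^ (10 * (k + 2)) * (l2Norm (grad g) * u ^ (k + 2)) /
        (l2Norm (grad g) * u ^ (k + 1)) = 2 ^ (10 * (k + 2)) * u := by
      rw [pow_succ u (k + 1)]
      field_simp
    rw [div_mul_eq_mul_div, le_div_iff₀' hκ, add_mul]
    exact h.trans (add_le_add hscale.le hsmall)

end LargeGradient

section Density

variable {ν : Measure ℝ} {D α ε : ℝ}

/-- The bound `σ(ν, ε) ≤ D * ε ^ α` for a law `ν` on the line that is not yet known to have a
density; the test functions are only required to be `C¹`, so as to allow primitives of continuous
functions. -/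
def ModulusBound (ν : Measure ℝ) (D α : ℝ) : Prop :=
  ∀ (φ : ℝ → ℝ) (ε : ℝ), ContDiff ℝ 1 φ → 0 < ε → (∀ x, |φ x| ≤ ε) → (∀ x, |deriv φ x| ≤ 1) →
    |∫ s, deriv φ s ∂ν| ≤ D * ε ^ α

lemma ModulusBound.integral_le (h : ModulusBound ν D α) {ψ : ℝ → ℝ} (hψ : Continuous ψ)
    (hψint : Integrable ψ) (hψ01 : ∀ x, ψ x ∈ Set.Icc 0 1) (hε : 0 < ε) (hψε : ∫ x, ψ x ≤ ε) :
    ∫ x, ψ x ∂ν ≤ D * ε ^ α := by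
  set φ : ℝ → ℝ := fun x => ∫ s in (0 : ℝ)..x, ψ s
  have hφ' (x : ℝ) : HasDerivAt φ (ψ x) x := (hψ.integral_hasStrictDerivAt 0 x).hasDerivAt
  have hderiv : deriv φ = ψ := funext fun x => (hφ' x).deriv
  have hφ : ContDiff ℝ 1 φ := by
    rw [contDiff_one_iff_deriv, hderiv]
    exact ⟨fun x => (hφ' x).differentiableAt, hψ⟩
  have hφε (x : ℝ) : |φ x| ≤ ε := by
    rw [← Real.norm_eq_abs, intervalIntegral.norm_intervalIntegral_eq,
      Real.norm_of_nonneg (integral_nonneg fun x => (hψ01 x).1)]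
    exact (setIntegral_le_integral hψint (.of_forall fun x => (hψ01 x).1)).trans hψε
  have hbound := h φ ε hφ hε hφε fun x => by
    rw [hderiv, abs_of_nonneg (hψ01 x).1]
    exact (hψ01 x).2
  rw [hderiv] at hbound
  exact (le_abs_self _).trans hbound

lemma ModulusBound.measureReal_le [IsFiniteMeasure ν] (h : ModulusBound ν D α) {K : Set ℝ}
    (hK : IsCompact K) (hK0 : volume K = 0) (hε : 0 < ε) : ν.real K ≤ D * ε ^ α := by
  obtain ⟨U, hKU, hU, hUε⟩ := K.exists_isOpen_lt_of_lt (μ := volume) (ENNReal.ofReal ε)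
    (by rwa [hK0, ENNReal.ofReal_pos])
  obtain ⟨ψ, hψK, hψU, hψsupp, hψ01⟩ := exists_continuous_one_zero_of_isCompact hK
    hU.isClosed_compl (Set.disjoint_compl_right_iff_subset.2 hKU)
  have hψint : Integrable ψ := ψ.continuous.integrable_of_hasCompactSupport hψsupp
  have hψε : ∫ x, ψ x ≤ ε :=
    calc ∫ x, ψ x = ∫ x in U, ψ x :=
          (setIntegral_eq_integral_of_forall_compl_eq_zero fun x hx => hψU hx).symm
      _ ≤ ∫ _ in U, 1 := setIntegral_mono hψint.integrableOn
          (integrableOn_const (ne_top_of_lt hUε)) fun x => (hψ01 x).2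
      _ = volume.real U := setIntegral_one_eq_measureReal
      _ ≤ ε := ENNReal.toReal_le_of_le_ofReal hε.le hUε.le
  have hψν : Integrable ψ ν := .of_bound ψ.continuous.aestronglyMeasurable 1
    (.of_forall fun x => by rw [Real.norm_of_nonneg (hψ01 x).1]; exact (hψ01 x).2)
  calc ν.real K = ∫ x in K, ψ x ∂ν := by
        rw [← setIntegral_one_eq_measureReal]
        exact setIntegral_congr_fun hK.measurableSet fun x hx => (hψK hx).symm
    _ ≤ ∫ x, ψ x ∂ν := setIntegral_le_integral hψν (.of_forall fun x => (hψ01 x).1)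
    _ ≤ D * ε ^ α := h.integral_le ψ.continuous hψint hψ01 hε hψε

lemma ModulusBound.absolutelyContinuous [IsFiniteMeasure ν] (h : ModulusBound ν D α)
    (hα : 0 < α) : ν ≪ volume := by
  refine Measure.AbsolutelyContinuous.mk fun s hs hs0 => ?_
  simp only [hs.measure_eq_iSup_isCompact, ENNReal.iSup_eq_zero]
  intro K hKs hK
  have hlim : Filter.Tendsto (fun ε : ℝ => D * ε ^ α) (nhdsWithin 0 (Set.Ioi 0)) (nhds 0) := by
    have hcont := ((Real.continuous_rpow_const hα.le).const_mul D).tendsto 0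
    rw [Real.zero_rpow hα.ne', mul_zero] at hcont
    exact hcont.mono_left nhdsWithin_le_nhds
  have hνK : ν.real K ≤ 0 := ge_of_tendsto hlim <| Filter.eventually_of_mem self_mem_nhdsWithin
    fun _ hε => h.measureReal_le hK (measure_mono_null hKs hs0) hε
  exact (measureReal_eq_zero_iff).1 (hνK.antisymm measureReal_nonneg)

lemma ModulusBound.exists_density [IsFiniteMeasure ν] (h : ModulusBound ν D α) (hD : 0 ≤ D)
    (hα : 0 < α) :
    ∃ ρ : ℝ → ℝ, Integrable ρ ∧ ν = volume.withDensity (fun s => ENNReal.ofReal (ρ s)) ∧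
      ∀ ε : ℝ, 0 < ε → sigmaMod ρ ε ≤ D * ε ^ α := by
  have hac := h.absolutelyContinuous hα
  refine ⟨fun s => (ν.rnDeriv volume s).toReal, Measure.integrable_toReal_rnDeriv, ?_,
    fun ε hε => Real.sSup_le ?_ (by positivity)⟩
  · conv_lhs => rw [← Measure.withDensity_rnDeriv_eq ν volume hac]
    refine withDensity_congr_ae ?_
    filter_upwards [Measure.rnDeriv_lt_top ν volume] with s hs
    rw [ENNReal.ofReal_toReal hs.ne]
  · rintro r ⟨φ, hφ, -, hφε, hφ', rfl⟩
    have hint : ∫ s, deriv φ s * (ν.rnDeriv volume s).toReal = ∫ s, deriv φ s ∂ν := by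
      rw [← integral_rnDeriv_smul hac]
      simp only [smul_eq_mul, mul_comm]
    rw [hint]
    exact (le_abs_self _).trans (h φ ε (hφ.of_le (by exact_mod_cast le_top)) hε hφε hφ')

end Density

section AffineSubst

open MvPolynomial

lemma totalDegree_bind₁_le {R σ τ : Type*} [CommSemiring R] {f : σ → MvPolynomial τ R} {k : ℕ}
    (hf : ∀ i, (f i).totalDegree ≤ k) (p : MvPolynomial σ R) :
    (bind₁ f p).totalDegree ≤ p.totalDegree * k := by
  rw [bind₁, aeval_def, eval₂_eq]
  refine totalDegree_finsetSum_le fun m hm => ?_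
  calc _ ≤ (∏ i ∈ m.support, f i ^ m i).totalDegree := by
        refine (totalDegree_mul _ _).trans_eq ?_
        rw [algebraMap_eq, totalDegree_C, zero_add]
    _ ≤ ∑ i ∈ m.support, m i * k := (totalDegree_finsetProd _ _).trans <|
        Finset.sum_le_sum fun i _ => (totalDegree_pow _ _).trans (Nat.mul_le_mul_left _ (hf i))
    _ ≤ p.totalDegree * k := by
        rw [← Finset.sum_mul]
        exact Nat.mul_le_mul_right k (le_totalDegree hm)

variable {σ τ : Type*}

lemma measurable_const_add_linearMap [Finite σ] [Finite τ] (L : (σ → ℝ) →ₗ[ℝ] (τ → ℝ))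
    (b : τ → ℝ) : Measurable fun x => b + L x :=
  (L.continuous_of_finiteDimensional.const_add b).measurable

variable [Fintype σ] [DecidableEq σ] (L : (σ → ℝ) →ₗ[ℝ] (τ → ℝ)) (b : τ → ℝ)
  (p : MvPolynomial τ ℝ)

/-- The polynomial `x ↦ p (b + L x)`. -/
noncomputable def affineSubst : MvPolynomial σ ℝ :=
  bind₁ (fun i => C (b i) + L.toMatrix'.toMvPolynomial i) p

lemma totalDegree_affineSubst_le : (affineSubst L b p).totalDegree ≤ p.totalDegree := by
  refine (totalDegree_bind₁_le (k := 1) (fun i => ?_) p).trans_eq (mul_one _)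
  refine (totalDegree_add _ _).trans (max_le ?_ (Matrix.toMvPolynomial_totalDegree_le _ i))
  exact (totalDegree_C _).trans_le zero_le_one

lemma eval_affineSubst (x : σ → ℝ) : eval x (affineSubst L b p) = eval (b + L x) p := by
  refine (eval₂Hom_bind₁ (RingHom.id ℝ) x _ p).trans (congrArg (eval · p) (funext fun i => ?_))
  change eval x (C (b i) + L.toMatrix'.toMvPolynomial i) = b i + L x i
  rw [map_add, eval_C, Matrix.toMvPolynomial_eval_eq_apply, LinearMap.toMatrix'_mulVec]

lemma map_eval_affine [Finite τ] (μ : Measure (σ → ℝ)) :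
    (μ.map fun x => b + L x).map (fun x => eval x p) =
      μ.map (fun x => eval x (affineSubst L b p)) := by
  rw [Measure.map_map (continuous_eval p).measurable (measurable_const_add_linearMap L b)]
  simp only [eval_affineSubst, Function.comp_def]

lemma variance_eval_affine [Finite τ] (μ : Measure (σ → ℝ)) :
    variance (fun x => eval x p) (μ.map fun x => b + L x) =
      variance (fun x => eval x (affineSubst L b p)) μ := by
  rw [variance_map (continuous_eval p).aemeasurable
    (measurable_const_add_linearMap L b).aemeasurable]
  simp only [eval_affineSubst, Function.comp_def]

end AffineSubst

section Modulus

open MvPolynomial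

variable {d : ℕ}

lemma variance_eval_le {σ : Type*} [Fintype σ] (g : MvPolynomial σ ℝ) :
    variance (fun x => eval x g) (gaussianPi σ) ≤ 2 * l2Norm (grad g) ^ 2 := by
  rw [l2Norm_sq, variance_eq_integral (continuous_eval g).aemeasurable]
  refine le_of_eq_of_le ?_ (expect_sub_expect_sq_le g)
  simp only [expect_apply, map_pow, map_sub, eval_C]

lemma div_rpow_le_of_le_two_mul_sq {V τ ε : ℝ} (hd : 1 ≤ d) (hV : 0 < V) (hτ : 0 < τ)
    (hVτ : V ≤ 2 * τ ^ 2) (hε : 0 < ε) :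
    (ε / τ) ^ ((1 : ℝ) / d) ≤
      2 ^ ((1 : ℝ) / d) * V ^ (-(1 : ℝ) / (2 * d)) * ε ^ ((1 : ℝ) / d) := by
  have hsqrt : √V ≤ 2 * τ := Real.sqrt_le_iff.2 ⟨by positivity, by nlinarith⟩
  have hroot : V ^ (-(1 : ℝ) / (2 * d)) = (√V)⁻¹ ^ ((1 : ℝ) / d) := by
    rw [Real.sqrt_eq_rpow, ← Real.rpow_neg hV.le, ← Real.rpow_mul hV.le]
    congr 1
    ring
  rw [hroot, ← Real.mul_rpow (by positivity) (by positivity),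
    ← Real.mul_rpow (by positivity) hε.le]
  refine Real.rpow_le_rpow (by positivity) ?_ (by positivity)
  rw [← div_eq_mul_inv, div_mul_eq_mul_div, div_le_div_iff₀ hτ (Real.sqrt_pos.2 hV)]
  nlinarith

lemma exists_modulusBound (hd : 1 ≤ d) :
    ∃ C > 0, ∀ (σ : Type) [Fintype σ] (g : MvPolynomial σ ℝ), g.totalDegree ≤ d →
      0 < variance (fun x => eval x g) (gaussianPi σ) →
      ModulusBound ((gaussianPi σ).map fun x => eval x g)
        (C * variance (fun x => eval x g) (gaussianPi σ) ^ (-(1 : ℝ) / (2 * d))) (1 / d) := by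
  obtain ⟨C, hC, hbound⟩ := exists_abs_integral_deriv_comp_le hd
  refine ⟨C * 2 ^ ((1 : ℝ) / d), by positivity, fun σ _ g hg hvar φ ε hφ hε hφε hφ' => ?_⟩
  have hvar_le := variance_eval_le g
  have hτ : 0 < l2Norm (grad g) := (l2Norm_nonneg _).lt_of_ne' fun h => by
    rw [h] at hvar_le
    linarith
  have hu : l2Norm (grad g) * ((ε / l2Norm (grad g)) ^ ((1 : ℝ) / d)) ^ d = ε := by
    rw [one_div, Real.rpow_inv_natCast_pow (by positivity) (by omega), mul_div_cancel₀ _ hτ.ne']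
  rw [integral_map (continuous_eval g).aemeasurable
    (hφ.continuous_deriv le_rfl).aestronglyMeasurable]
  calc _ ≤ C * (ε / l2Norm (grad g)) ^ ((1 : ℝ) / d) :=
        hbound σ g hg hτ φ hφ hφ' _ (by positivity) fun r => (hφε r).trans_eq hu.symm
    _ ≤ _ := by
        rw [mul_assoc C, mul_assoc C]
        exact mul_le_mul_of_nonneg_left (div_rpow_le_of_le_two_mul_sq hd hvar hτ hvar_le hε) hC.le

end Modulus

end GaussPoly

/-- Theorem: for every `d` there is `C(d) > 0` such that for every Gaussian random vector `X`
in `ℝⁿ` and every non-constant (as a random variable) polynomial `g` of total degree at most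
`d`, the density `ϱ_g` of `g(X)` satisfies
`σ(ϱ_g, ε) ≤ C(d) (𝔻g(X))^{-1/(2d)} ε^{1/d}` for all `ε > 0`. -/
theorem sigma_bound_gaussian_polynomial (d : ℕ) (hd : 1 ≤ d) :
    ∃ C : ℝ, 0 < C ∧
      ∀ (n : ℕ) (μ : Measure (Fin n → ℝ)), IsGaussianVec μ →
        ∀ g : MvPolynomial (Fin n) ℝ, g.totalDegree ≤ d →
          0 < variance (fun x => MvPolynomial.eval x g) μ →
          ∃ ρ : ℝ → ℝ, Integrable ρ ∧
            μ.map (fun x => MvPolynomial.eval x g)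
              = volume.withDensity (fun s => ENNReal.ofReal (ρ s)) ∧
            ∀ ε : ℝ, 0 < ε →
              sigmaMod ρ ε ≤
                C * (variance (fun x => MvPolynomial.eval x g) μ) ^ (-(1 : ℝ) / (2 * d)) *
                  ε ^ ((1 : ℝ) / d) := by
  obtain ⟨C, hC, hbound⟩ := GaussPoly.exists_modulusBound hd
  refine ⟨C, hC, ?_⟩
  rintro n _ ⟨L, b, rfl⟩ g hg hvar
  rw [GaussPoly.variance_eval_affine] at hvar ⊢
  rw [GaussPoly.map_eval_affine]
  have hdeg := (GaussPoly.totalDegree_affineSubst_le L b g).trans hg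
  exact (hbound (Fin n) _ hdeg hvar).exists_density
    (mul_nonneg hC.le (Real.rpow_nonneg hvar.le _)) (by positivity)
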